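/- arXiv:2004.06553 — 3 statements merged into one kernel-verified Lean document; each statement's English description precedes it below -/
import Mathlib

section
/- Suppose d − m − 1 ≤ α < d − m (so α ∈ (0,d)). Then for every β > α − (α − m)/(d − 2m) and every C > 0 there exist a measure μ ∈ M_d with 0 < I_α(μ) < ∞ and a real number R > 1 such that ∫_{B^{d−1}(0,1)} |μ̂(R(ξ, ⟨Mξ,ξ⟩))|² √(1+4|ξ|²) dξ > C · R^{−β} · I_α(μ). (Equivalently, β(α, H_m^{d−1}) ≤ α − (α − m)/(d − 2m).) -/
open MeasureTheory Metric
open scoped ENNReal NNReal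

noncomputable section

/-- The quadratic form `⟨Mξ, ξ⟩` on `ℝ^{d-1}`, where the diagonal matrix `M` has its first
`d-1-m` diagonal entries equal to `+1` and its last `m` diagonal entries equal to `-1`. -/
def hypQ (d m : ℕ) (ξ : EuclideanSpace ℝ (Fin (d - 1))) : ℝ :=
  ∑ i : Fin (d - 1), (if (i : ℕ) < d - 1 - m then (1 : ℝ) else -1) * ξ i ^ 2

/-- The point `(ξ, ⟨Mξ, ξ⟩) ∈ ℝ^d` on the hyperbolic paraboloid. -/
def hypLift (d m : ℕ) (ξ : EuclideanSpace ℝ (Fin (d - 1))) : EuclideanSpace ℝ (Fin d) :=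
  (EuclideanSpace.equiv (Fin d) ℝ).symm
    (fun i => if h : (i : ℕ) < d - 1 then ξ ⟨i, h⟩ else hypQ d m ξ)

/-- The Fourier transform `μ̂(ζ) = ∫ e^{-i x·ζ} dμ(x)` of a measure on `ℝ^d`. -/
def ftM {d : ℕ} (μ : Measure (EuclideanSpace ℝ (Fin d))) (ζ : EuclideanSpace ℝ (Fin d)) : ℂ :=
  ∫ x, Complex.exp (-(Complex.I * (((∑ i, x i * ζ i) : ℝ) : ℂ))) ∂μ

/-- The `α`-dimensional energy `I_α(μ) = ∬ |x-y|^{-α} dμ(x) dμ(y)`. -/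
def energy {d : ℕ} (α : ℝ) (μ : Measure (EuclideanSpace ℝ (Fin d))) : ℝ≥0∞ :=
  ∫⁻ x, ∫⁻ y, ENNReal.ofReal (dist x y) ^ (-α) ∂μ ∂μ

/-- The hyperbolic average `∫_{B^{d-1}(0,1)} |μ̂(R(ξ,⟨Mξ,ξ⟩))|² √(1+4|ξ|²) dξ`. -/
def hypAvg (d m : ℕ) (μ : Measure (EuclideanSpace ℝ (Fin d))) (R : ℝ) : ℝ :=
  ∫ ξ in ball (0 : EuclideanSpace ℝ (Fin (d - 1))) 1,
    ‖ftM μ (R • hypLift d m ξ)‖ ^ 2 * Real.sqrt (1 + 4 * ‖ξ‖ ^ 2)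

/-- The decay estimate `∫_H |μ̂(Rξ)|² dσ(ξ) ≤ C R^{-β} I_α(μ)` holds with some constant `C`
uniformly over measures in `M_d` and all `R > 1`. -/
def decayBound (d m : ℕ) (α β : ℝ) : Prop :=
  ∃ C : ℝ, 0 < C ∧ ∀ μ : Measure (EuclideanSpace ℝ (Fin d)), IsFiniteMeasure μ →
    μ ((closedBall 0 1)ᶜ) = 0 → ∀ R : ℝ, 1 < R →
    ENNReal.ofReal (hypAvg d m μ R) ≤ ENNReal.ofReal (C * R ^ (-β)) * energy α μ

/-- The decay estimate with exponent `β` fails for every constant `C > 0`: there is a measure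
in `M_d` with finite positive `α`-energy and an `R > 1` violating the estimate. -/
def decayFails (d m : ℕ) (α β : ℝ) : Prop :=
  ∀ C : ℝ, 0 < C → ∃ μ : Measure (EuclideanSpace ℝ (Fin d)), IsFiniteMeasure μ ∧
    μ ((closedBall 0 1)ᶜ) = 0 ∧ 0 < energy α μ ∧ energy α μ ≠ ⊤ ∧
    ∃ R : ℝ, 1 < R ∧ C * R ^ (-β) * (energy α μ).toReal < hypAvg d m μ R

lemma aux_kernel (α : ℝ) (hα : 0 < α) (t : ℝ) (ht : 0 ≤ t) :
    ENNReal.ofReal t ^ (-α) ≤ 1 + ∑' j : ℕ, ENNReal.ofReal ((2:ℝ) ^ (((j:ℝ) + 1) * α)) *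
      (if t ≤ (2:ℝ)⁻¹ ^ j then 1 else 0) := by
  rcases ht.eq_or_lt with h0 | h0
  · subst h0
    have : ∑' j : ℕ, ENNReal.ofReal ((2:ℝ) ^ (((j:ℝ) + 1) * α)) *
      (if (0:ℝ) ≤ (2:ℝ)⁻¹ ^ j then 1 else 0) = ⊤ := by
      rw [eq_top_iff, ← ENNReal.tsum_const_eq_top_of_ne_zero (α := ℕ) (one_ne_zero (α := ℝ≥0∞))]
      refine ENNReal.tsum_le_tsum fun j => ?_
      rw [if_pos (by positivity), mul_one, ENNReal.one_le_ofReal]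
      exact Real.one_le_rpow (by norm_num) (by positivity)
    rw [this]; simp
  · rcases le_or_gt t 1 with h1 | h1
    · obtain ⟨j, hj1, hj2⟩ := exists_nat_pow_near_of_lt_one h0 h1 (y := (2:ℝ)⁻¹) (by norm_num) (by norm_num)
      refine le_trans ?_ (le_trans (ENNReal.le_tsum j) le_add_self)
      rw [if_pos hj2, mul_one, ENNReal.ofReal_rpow_of_pos h0]
      apply ENNReal.ofReal_le_ofReal
      have h2 : (2:ℝ) ^ (((j:ℝ) + 1) * α) = (((2:ℝ)⁻¹) ^ (j+1)) ^ (-α) := by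
        rw [← Real.rpow_natCast, Real.inv_rpow (by norm_num), ← Real.rpow_neg (by norm_num),
          ← Real.rpow_mul (by norm_num)]
        push_cast; ring_nf
      rw [h2]
      exact Real.rpow_le_rpow_of_nonpos (by positivity) hj1.le (by linarith)
    · refine le_trans ?_ le_self_add
      rw [ENNReal.ofReal_rpow_of_pos h0, ENNReal.ofReal_le_one]
      exact Real.rpow_le_one_of_one_le_of_nonpos h1.le (by linarith)

lemma energy_le {d : ℕ} (α α₀ : ℝ) (hα : 0 < α) (h : α < α₀) :
    ∃ C : ℝ, 0 < C ∧ ∀ (μ : Measure (EuclideanSpace ℝ (Fin d))) (K : ℝ), IsProbabilityMeasure μ →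
      0 ≤ K → (∀ x r, 0 < r → μ (closedBall x r) ≤ ENNReal.ofReal (K * r ^ α₀)) →
      energy α μ ≤ ENNReal.ofReal (1 + C * K) := by
  have hq0 : (0:ℝ) < (2:ℝ) ^ (α - α₀) := by positivity
  have hq1 : (2:ℝ) ^ (α - α₀) < 1 := Real.rpow_lt_one_of_one_lt_of_neg (by norm_num) (by linarith)
  refine ⟨(2:ℝ) ^ α * (1 - (2:ℝ) ^ (α - α₀))⁻¹, mul_pos (by positivity) (inv_pos.2 (by linarith)), ?_⟩
  intro μ K hμ hK hF
  have key : ∀ x, ∫⁻ y, ENNReal.ofReal (dist x y) ^ (-α) ∂μ ≤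
      ENNReal.ofReal (1 + (2:ℝ) ^ α * (1 - (2:ℝ) ^ (α - α₀))⁻¹ * K) := by
    intro x
    calc ∫⁻ y, ENNReal.ofReal (dist x y) ^ (-α) ∂μ
        ≤ ∫⁻ y, (1 + ∑' j : ℕ, ENNReal.ofReal ((2:ℝ) ^ (((j:ℝ) + 1) * α)) *
          (closedBall x ((2:ℝ)⁻¹ ^ j)).indicator (fun _ => 1) y) ∂μ := by
          refine lintegral_mono fun y => (aux_kernel α hα _ dist_nonneg).trans_eq ?_
          simp [Set.indicator, mem_closedBall, dist_comm]
      _ = 1 + ∑' j : ℕ, ENNReal.ofReal ((2:ℝ) ^ (((j:ℝ) + 1) * α)) *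
            μ (closedBall x ((2:ℝ)⁻¹ ^ j)) := by
          rw [lintegral_add_left measurable_const, lintegral_tsum]
          · simp only [lintegral_const, measure_univ, mul_one]
            congr 1
            refine tsum_congr fun j => ?_
            rw [lintegral_const_mul _ (measurable_const.indicator measurableSet_closedBall),
              lintegral_indicator measurableSet_closedBall]
            simp
          · intro j
            exact ((measurable_const.indicator measurableSet_closedBall).const_mul _).aemeasurable
      _ ≤ 1 + ∑' j : ℕ, ENNReal.ofReal ((2:ℝ) ^ α * K * ((2:ℝ) ^ (α - α₀)) ^ j) := by
          gcongr with j
          refine (mul_le_mul_right (hF x _ (by positivity)) _).trans_eq ?_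
          rw [← ENNReal.ofReal_mul (by positivity)]
          congr 1
          rw [← Real.rpow_natCast ((2:ℝ)⁻¹), ← Real.rpow_natCast ((2:ℝ) ^ (α - α₀)), Real.inv_rpow (by norm_num), ← Real.rpow_neg (by norm_num),
            ← Real.rpow_mul (by norm_num), ← Real.rpow_mul (by norm_num),
            show ((j:ℝ) + 1) * α = α + j * α by ring, Real.rpow_add (by norm_num),
            show (α - α₀) * (j:ℝ) = j * α + -↑j * α₀ by ring, Real.rpow_add (by norm_num)]
          ring
      _ = _ := by
          have hs := (summable_geometric_of_lt_one hq0.le hq1).mul_left ((2:ℝ) ^ α * K)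
          rw [← ENNReal.ofReal_tsum_of_nonneg (fun j => by positivity) hs, tsum_mul_left,
            tsum_geometric_of_lt_one hq0.le hq1, ← ENNReal.ofReal_one,
            ← ENNReal.ofReal_add (by norm_num)]
          · congr 1; ring
          · have : 0 < (1 - (2:ℝ) ^ (α - α₀))⁻¹ := inv_pos.2 (by linarith)
            positivity
  unfold energy
  refine (lintegral_mono key).trans ?_
  simp

lemma energy_pos {d : ℕ} (α : ℝ) (μ : Measure (EuclideanSpace ℝ (Fin d))) [IsProbabilityMeasure μ]
    (hα : 0 < α) : 0 < energy α μ := by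
  have hm : Measurable (fun p : EuclideanSpace ℝ (Fin d) × EuclideanSpace ℝ (Fin d) =>
      ENNReal.ofReal (dist p.1 p.2) ^ (-α)) := by fun_prop
  have hne : ∀ x y : EuclideanSpace ℝ (Fin d), ENNReal.ofReal (dist x y) ^ (-α) ≠ 0 := by
    intro x y h
    rw [ENNReal.rpow_eq_zero_iff] at h
    rcases h with h | h
    · linarith [h.2]
    · exact ENNReal.ofReal_ne_top h.1
  rw [pos_iff_ne_zero]
  intro h0
  unfold energy at h0
  rw [lintegral_eq_zero_iff hm.lintegral_prod_right'] at h0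
  obtain ⟨x, hx⟩ := h0.exists
  simp only [Pi.zero_apply] at hx
  rw [lintegral_eq_zero_iff (by fun_prop)] at hx
  obtain ⟨y, hy⟩ := hx.exists
  exact hne x y hy

/-- averaged lattice measure -/
def latM (L : ℝ) (N : ℕ) (δ : ℝ) : Measure ℝ :=
  ENNReal.ofReal ((N * δ)⁻¹) • ∑ k ∈ Finset.range N, volume.restrict (Set.Icc (L * k) (L * k + δ))

lemma latM_prob (L : ℝ) (N : ℕ) (δ : ℝ) (hN : 0 < N) (hδ : 0 < δ) :
    IsProbabilityMeasure (latM L N δ) := by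
  constructor
  have hN' : (0:ℝ) < N := by exact_mod_cast hN
  simp only [latM, Measure.smul_apply, Measure.finsetSum_apply, Measure.restrict_apply_univ,
    Real.volume_Icc, add_sub_cancel_left, Finset.sum_const, Finset.card_range, smul_eq_mul, nsmul_eq_mul]
  rw [← ENNReal.ofReal_natCast N, ← ENNReal.ofReal_mul (by positivity), ← ENNReal.ofReal_mul (by positivity),
    inv_mul_cancel₀ (by positivity), ENNReal.ofReal_one]

lemma latM_supp (L : ℝ) (N : ℕ) (δ : ℝ) :
    ∀ᵐ x ∂(latM L N δ), ∃ k : ℕ, k < N ∧ ∃ s, 0 ≤ s ∧ s ≤ δ ∧ x = L * k + s := by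
  apply Measure.ae_smul_measure
  rw [ae_iff, Measure.finsetSum_apply, Finset.sum_eq_zero]
  intro k hk
  rw [← ae_iff]
  filter_upwards [ae_restrict_mem measurableSet_Icc] with x hx
  exact ⟨k, Finset.mem_range.1 hk, x - L * k, by linarith [hx.1], by linarith [hx.2], by ring⟩

lemma card_near (L : ℝ) (hL : 0 < L) (N : ℕ) (x ℓ : ℝ) (hℓ : 0 ≤ ℓ) :
    (((Finset.range N).filter (fun k : ℕ => |L * k - x| ≤ ℓ)).card : ℝ) ≤ 2 * ℓ / L + 1 := by
  have h1 : ((Finset.range N).filter (fun k : ℕ => |L * k - x| ≤ ℓ)).card ≤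
      (Finset.Icc ⌈(x - ℓ) / L⌉ ⌊(x + ℓ) / L⌋).card := by
    apply Finset.card_le_card_of_injOn (fun k : ℕ => (k : ℤ))
    · intro k hk
      simp only [Finset.coe_filter, Finset.mem_range, Set.mem_setOf_eq, abs_le] at hk
      simp only [Finset.coe_Icc, Set.mem_Icc]
      constructor
      · rw [Int.ceil_le, div_le_iff₀ hL]; push_cast; linarith [hk.2.1]
      · rw [Int.le_floor, le_div_iff₀ hL]; push_cast; linarith [hk.2.2]
    · intro a _ b _ h; simpa using h
  have h2 : ((Finset.Icc ⌈(x - ℓ) / L⌉ ⌊(x + ℓ) / L⌋).card : ℝ) ≤ 2 * ℓ / L + 1 := by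
    rw [Int.card_Icc]
    have h4 : 2 * ℓ / L = (x + ℓ) / L - (x - ℓ) / L := by ring
    have h0 : 0 ≤ 2 * ℓ / L := by positivity
    rcases le_total 0 (⌊(x + ℓ) / L⌋ + 1 - ⌈(x - ℓ) / L⌉) with h | h
    · have h3 : (((⌊(x + ℓ) / L⌋ + 1 - ⌈(x - ℓ) / L⌉).toNat : ℤ) : ℝ) = ((⌊(x + ℓ) / L⌋ + 1 - ⌈(x - ℓ) / L⌉ : ℤ) : ℝ) := by
        rw [Int.toNat_of_nonneg h]
      rw [Int.cast_natCast] at h3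
      rw [h3]
      push_cast
      linarith [Int.floor_le ((x + ℓ) / L), Int.le_ceil ((x - ℓ) / L)]
    · rw [Int.toNat_of_nonpos h]; push_cast; linarith
  exact le_trans (by exact_mod_cast h1) h2

lemma latM_ball (L : ℝ) (N : ℕ) (δ : ℝ) (hN : 0 < N) (hδ : 0 < δ) (hL : δ ≤ L) (x r : ℝ) (hr : 0 < r) :
    latM L N δ (closedBall x r) ≤ ENNReal.ofReal
      ((N:ℝ)⁻¹ * min 1 (2 * r / δ) * (2 * (r + δ) / L + 1)) := by
  have hN' : (0:ℝ) < N := by exact_mod_cast hN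
  have hL0 : 0 < L := by linarith
  have h1 : ∀ k ∈ Finset.range N, volume.restrict (Set.Icc (L * k) (L * k + δ)) (closedBall x r) ≤
      if |L * k - x| ≤ r + δ then ENNReal.ofReal (min δ (2 * r)) else 0 := by
    intro k _
    rw [Measure.restrict_apply measurableSet_closedBall]
    split_ifs with h
    · rw [ENNReal.ofReal_min]
      refine le_min ?_ ?_
      · exact (measure_mono Set.inter_subset_right).trans_eq (by simp)
      · exact (measure_mono Set.inter_subset_left).trans_eq (by simp)
    · rw [nonpos_iff_eq_zero]
      convert measure_empty (μ := (volume : Measure ℝ))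
      rw [Set.eq_empty_iff_forall_notMem]
      rintro y ⟨hy1, hy2⟩
      apply h
      rw [Real.closedBall_eq_Icc] at hy1
      rw [abs_le]
      constructor <;> linarith [hy1.1, hy1.2, hy2.1, hy2.2]
  simp only [latM, Measure.smul_apply, Measure.finsetSum_apply, smul_eq_mul]
  calc _ ≤ ENNReal.ofReal ((N * δ)⁻¹) * ∑ k ∈ Finset.range N,
        (if |L * k - x| ≤ r + δ then ENNReal.ofReal (min δ (2 * r)) else 0) := by
        gcongr with k hk; exact h1 k hk
    _ = ENNReal.ofReal ((N * δ)⁻¹ * ((((Finset.range N).filter (fun k : ℕ => |L * k - x| ≤ r + δ)).card : ℝ) * min δ (2 * r))) := by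
        rw [Finset.sum_ite, Finset.sum_const, Finset.sum_const_zero, add_zero, nsmul_eq_mul,
          ← ENNReal.ofReal_natCast, ← ENNReal.ofReal_mul (by positivity), ← ENNReal.ofReal_mul (by positivity)]
    _ ≤ _ := by
        apply ENNReal.ofReal_le_ofReal
        have h2 : min δ (2 * r) = δ * min 1 (2 * r / δ) := by
          rw [mul_min_of_nonneg _ _ hδ.le]; congr 1 <;> field_simp
        have h3 := card_near L hL0 N x (r + δ) (by positivity)
        have h4 : 0 < min 1 (2 * r / δ) := lt_min one_pos (by positivity)
        rw [h2]
        calc _ = (N:ℝ)⁻¹ * min 1 (2 * r / δ) * (((Finset.range N).filter (fun k : ℕ => |L * k - x| ≤ r + δ)).card : ℝ) := by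
              field_simp
          _ ≤ _ := by gcongr

lemma latM_ball1 (L : ℝ) (N : ℕ) (δ : ℝ) (hN : 0 < N) (hδ : 0 < δ) (hL : δ ≤ L) (x r : ℝ) (hr : 0 < r) :
    latM L N δ (closedBall x r) ≤ ENNReal.ofReal (10 * r / (N * δ)) := by
  have hN' : (0:ℝ) < N := by exact_mod_cast hN
  have hL0 : 0 < L := by linarith
  refine (latM_ball L N δ hN hδ hL x r hr).trans (ENNReal.ofReal_le_ofReal ?_)
  rw [mul_assoc, show 10 * r / (N * δ) = (N:ℝ)⁻¹ * (10 * r / δ) by field_simp]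
  gcongr
  have h5 : δ / L ≤ 1 := (div_le_one hL0).2 hL
  have h6 : 2 * (r + δ) / L = 2 * (r / L) + 2 * (δ / L) := by ring
  have h7 : r / L ≤ r / δ := by gcongr
  have h8 : 10 * r / δ = 10 * (r / δ) := by ring
  have h9 : 2 * r / δ = 2 * (r / δ) := by ring
  have h0 : 0 < r / δ := by positivity
  have h10 : 0 < r / L := by positivity
  have h11 : 0 < δ / L := by positivity
  rw [h6, h8, h9]
  rcases le_total δ r with h | h
  · have : 1 ≤ r / δ := (one_le_div hδ).2 h
    calc _ ≤ 1 * (2 * (r / L) + 2 * (δ / L) + 1) := by gcongr; exact min_le_left _ _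
      _ ≤ _ := by linarith
  · have : r / δ ≤ 1 := (div_le_one hδ).2 h
    calc _ ≤ (2 * (r / δ)) * (2 * 1 + 2 * 1 + 1) := by gcongr; exact min_le_right _ _; linarith
      _ ≤ _ := by linarith

lemma latM_ball2 (L : ℝ) (N : ℕ) (δ : ℝ) (hN : 0 < N) (hδ : 0 < δ) (hL : δ ≤ L) (x r : ℝ) (hr : 0 < r) :
    latM L N δ (closedBall x r) ≤ ENNReal.ofReal ((N:ℝ)⁻¹ * (2 * r / L + 3)) := by
  have hL0 : 0 < L := by linarith
  have h5 : δ / L ≤ 1 := (div_le_one hL0).2 hL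
  have h6 : 2 * (r + δ) / L = 2 * r / L + 2 * (δ / L) := by ring
  refine (latM_ball L N δ hN hδ hL x r hr).trans (ENNReal.ofReal_le_ofReal ?_)
  rw [mul_assoc]
  gcongr
  have h0 : 0 < 2 * (r + δ) / L := by positivity
  calc _ ≤ 1 * (2 * (r + δ) / L + 1) := by gcongr; exact min_le_left _ _
      _ ≤ _ := by linarith

/-- frequency lattice set -/
def latS (A : ℝ) (N : ℕ) (δ : ℝ) : Set ℝ := ⋃ k ∈ Finset.range N, Set.Ico (A * k) (A * k + δ)

lemma latS_meas (A : ℝ) (N : ℕ) (δ : ℝ) : MeasurableSet (latS A N δ) :=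
  Finset.measurableSet_biUnion _ fun _ _ => measurableSet_Ico

lemma latS_mem {A : ℝ} {N : ℕ} {δ : ℝ} {x : ℝ} (h : x ∈ latS A N δ) :
    ∃ k : ℕ, k < N ∧ ∃ s, 0 ≤ s ∧ s ≤ δ ∧ x = A * k + s := by
  simp only [latS, Set.mem_iUnion, Finset.mem_range] at h
  obtain ⟨k, hk, hx⟩ := h
  exact ⟨k, hk, x - A * k, by linarith [hx.1], by linarith [hx.2], by ring⟩

lemma latS_vol (A : ℝ) (N : ℕ) (δ : ℝ) (hδ : 0 < δ) (hA : δ ≤ A) :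
    volume (latS A N δ) = ENNReal.ofReal (N * δ) := by
  unfold latS
  rw [measure_biUnion_finset]
  · simp only [Real.volume_Ico, add_sub_cancel_left, Finset.sum_const, Finset.card_range, nsmul_eq_mul]
    rw [ENNReal.ofReal_mul (by positivity), ENNReal.ofReal_natCast]
  · have key : ∀ a b : ℕ, a < b → Disjoint (Set.Ico (A * a) (A * a + δ)) (Set.Ico (A * b) (A * b + δ)) := by
      intro a b hab
      rw [Set.disjoint_left]
      rintro y ⟨_, h2⟩ ⟨h3, _⟩
      have : (a:ℝ) + 1 ≤ b := by exact_mod_cast hab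
      nlinarith
    intro a _ b _ hab
    rcases lt_or_gt_of_ne hab with h | h
    · exact key a b h
    · exact (key b a h).symm
  · intro _ _; exact measurableSet_Ico

def NearZ (θ ε : ℝ) : Prop := ∃ z : ℤ, |θ - 2 * Real.pi * z| ≤ ε

lemma NearZ.add {a b ε ε' : ℝ} (h : NearZ a ε) (h' : NearZ b ε') : NearZ (a + b) (ε + ε') := by
  obtain ⟨z, hz⟩ := h
  obtain ⟨w, hw⟩ := h'
  refine ⟨z + w, ?_⟩
  push_cast
  rw [show a + b - 2 * Real.pi * (z + w) = (a - 2 * Real.pi * z) + (b - 2 * Real.pi * w) by ring]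
  exact (abs_add_le _ _).trans (add_le_add hz hw)

lemma NearZ.sum {n : ℕ} {f : Fin n → ℝ} {ε : ℝ} (h : ∀ i, NearZ (f i) ε) :
    NearZ (∑ i, f i) (n * ε) := by
  choose z hz using h
  refine ⟨∑ i, z i, ?_⟩
  push_cast
  rw [Finset.mul_sum, ← Finset.sum_sub_distrib]
  refine (Finset.abs_sum_le_sum_abs _ _).trans ?_
  refine (Finset.sum_le_sum fun i _ => hz i).trans ?_
  simp

lemma near_pair (R c x u v t : ℝ) (hR : 1 < R) (hc : 0 < c) (hc1 : c ≤ 1)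
    (hx : 0 ≤ x ∧ x ≤ c) (hu : 0 ≤ u ∧ u ≤ c / R) (hv : 0 ≤ v ∧ v ≤ c) (ht : 0 ≤ t ∧ t ≤ c) :
    NearZ (x * (R * (v + u)) + (-x) * (R * v) + t * R * ((v + u) ^ 2 - v ^ 2)) (8 * c) := by
  refine ⟨0, ?_⟩
  obtain ⟨hx0, hx1⟩ := hx
  obtain ⟨hu0, hu1⟩ := hu
  obtain ⟨hv0, hv1⟩ := hv
  obtain ⟨ht0, ht1⟩ := ht
  have hRu : R * u ≤ c := by rw [le_div_iff₀ (by linarith)] at hu1; linarith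
  have hu2 : u ≤ c := hu1.trans (div_le_self hc.le hR.le)
  have hRu0 : 0 ≤ R * u := by positivity
  have e : x * (R * (v + u)) + (-x) * (R * v) + t * R * ((v + u) ^ 2 - v ^ 2) - 2 * Real.pi * ((0:ℤ):ℝ)
    = (R * u) * (x + t * (u + 2 * v)) := by push_cast; ring
  rw [e, abs_of_nonneg (by positivity)]
  calc (R * u) * (x + t * (u + 2 * v)) ≤ c * (1 + 1 * (1 + 2 * 1)) := by
        gcongr <;> linarith
    _ ≤ _ := by linarith

lemma near_one (R c x w t : ℝ) (hR : 1 < R) (hc : 0 < c) (hc1 : c ≤ 1)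
    (hx : 0 ≤ x ∧ x ≤ c * R ^ (-(1/2) : ℝ)) (hw : 0 ≤ w ∧ w ≤ c * R ^ (-(1/2) : ℝ)) (ht : 0 ≤ t ∧ t ≤ c) :
    NearZ (x * (R * w) + t * R * w ^ 2) (8 * c) := by
  refine ⟨0, ?_⟩
  obtain ⟨hx0, hx1⟩ := hx
  obtain ⟨hw0, hw1⟩ := hw
  obtain ⟨ht0, ht1⟩ := ht
  have hR0 : 0 < R := by linarith
  have hρ : R * (R ^ (-(1/2) : ℝ) * R ^ (-(1/2) : ℝ)) = 1 := by
    rw [← Real.rpow_add hR0]; norm_num; rw [Real.rpow_neg_one]; field_simp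
  have e : x * (R * w) + t * R * w ^ 2 - 2 * Real.pi * ((0:ℤ):ℝ) = R * (x * w) + t * (R * (w * w)) := by
    push_cast; ring
  rw [e, abs_of_nonneg (by positivity)]
  have h1 : R * (x * w) ≤ R * ((c * R ^ (-(1/2) : ℝ)) * (c * R ^ (-(1/2) : ℝ))) := by gcongr
  have h2 : R * (w * w) ≤ R * ((c * R ^ (-(1/2) : ℝ)) * (c * R ^ (-(1/2) : ℝ))) := by gcongr
  have h3 : R * ((c * R ^ (-(1/2) : ℝ)) * (c * R ^ (-(1/2) : ℝ))) = c * c := by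
    linear_combination c * c * hρ
  rw [h3] at h1 h2
  calc _ ≤ c * c + c * (c * c) := by gcongr
    _ ≤ c * 1 + c * (1 * 1) := by gcongr
    _ ≤ _ := by linarith

lemma near_lat (R c A B T x w t s s' s'' : ℝ) (l k p : ℕ) (hR : 1 < R) (hc : 0 < c) (hc1 : c ≤ 1)
    (hA : 0 < A) (hB : 0 < B) (hT : 0 < T)
    (hAB : R * A * B = 2 * Real.pi) (hAT : R * T * A ^ 2 = 2 * Real.pi)
    (hx : x = B * l + s') (hx1 : x ≤ c) (hw : w = A * k + s) (hw1 : w ≤ c)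
    (ht : t = T * p + s'') (ht1 : t ≤ c)
    (hs : 0 ≤ s ∧ s ≤ c / R) (hs' : 0 ≤ s' ∧ s' ≤ c / R) (hs'' : 0 ≤ s'' ∧ s'' ≤ c / R) :
    NearZ (x * (R * w) + t * R * w ^ 2) (8 * c) := by
  refine ⟨l * k + p * k ^ 2, ?_⟩
  obtain ⟨h1, h2⟩ := hs
  obtain ⟨h3, h4⟩ := hs'
  obtain ⟨h5, h6⟩ := hs''
  have hR0 : 0 < R := by linarith
  rw [le_div_iff₀ hR0, mul_comm] at h2 h4 h6
  have hAk : 0 ≤ A * k := by positivity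
  have hBl : 0 ≤ B * l := by positivity
  have hTp : 0 ≤ T * p := by positivity
  have e : x * (R * w) + t * R * w ^ 2 - 2 * Real.pi * ((l * k + p * k ^ 2 : ℤ):ℝ) =
    (B * l) * (R * s) + (R * s') * w + t * ((R * s) * (A * k + w)) + (R * s'') * (A * k) ^ 2 := by
    push_cast
    rw [mul_add, ← mul_assoc, ← mul_assoc (2 * Real.pi) (p:ℝ)]
    nth_rewrite 1 [← hAB]
    rw [← hAT, hx, hw, ht]; ring
  have hw0 : 0 ≤ w := by rw [hw]; positivity
  have ht0 : 0 ≤ t := by rw [ht]; positivity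
  rw [e, abs_of_nonneg (by positivity)]
  calc _ ≤ 1 * c + c * 1 + 1 * (c * (1 + 1)) + c * 1 ^ 2 := by
        gcongr <;> linarith
    _ ≤ _ := by linarith

/-- embedding of the parameters -/
def embZ (m k : ℕ) (z : (Fin m ⊕ Fin k) ⊕ Unit → ℝ) : EuclideanSpace ℝ (Fin (m + k + m + 1)) :=
  WithLp.toLp 2 (Fin.snoc (α := fun _ => ℝ) (Fin.append (Fin.append (fun j => z (.inl (.inl j))) (fun j => z (.inl (.inr j))))
    (fun j => - z (.inl (.inl j)))) (z (.inr ())))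

lemma embZ_a (m k : ℕ) (z) (j : Fin m) :
    embZ m k z (Fin.castSucc (Fin.castAdd m (Fin.castAdd k j))) = z (.inl (.inl j)) := by
  simp [embZ, Fin.append_left]
lemma embZ_w (m k : ℕ) (z) (j : Fin k) :
    embZ m k z (Fin.castSucc (Fin.castAdd m (Fin.natAdd m j))) = z (.inl (.inr j)) := by
  simp [embZ, Fin.append_left, Fin.append_right]
lemma embZ_b (m k : ℕ) (z) (j : Fin m) :
    embZ m k z (Fin.castSucc (Fin.natAdd (m + k) j)) = - z (.inl (.inl j)) := by
  unfold embZ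
  rw [PiLp.toLp_apply, Fin.snoc_castSucc, Fin.append_right]
lemma embZ_t (m k : ℕ) (z) :
    embZ m k z (Fin.last _) = z (.inr ()) := by
  simp [embZ]

lemma hypQ_eq (m k : ℕ) (ξ : EuclideanSpace ℝ (Fin (m + k + m))) :
    hypQ (m + k + m + 1) m ξ = ∑ j : Fin m, (ξ (Fin.castAdd m (Fin.castAdd k j)) ^ 2 - ξ (Fin.natAdd (m + k) j) ^ 2)
      + ∑ j : Fin k, ξ (Fin.castAdd m (Fin.natAdd m j)) ^ 2 := by
  have h0 : m + k + m + 1 - 1 - m = m + k := by omega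
  unfold hypQ
  rw [h0]
  change ∑ i : Fin (m + k + m), (if (i:ℕ) < m + k then (1:ℝ) else -1) * ξ i ^ 2 = _
  rw [Fin.sum_univ_add, Fin.sum_univ_add, Finset.sum_sub_distrib]
  have e1 : ∀ j : Fin m, (j:ℕ) < m + k := fun j => by omega
  simp [e1]
  ring

lemma phase_eq (m k : ℕ) (R : ℝ) (z) (ξ : EuclideanSpace ℝ (Fin (m + k + m))) :
    ∑ i, embZ m k z i * (R • hypLift (m + k + m + 1) m ξ) i =
     ∑ j : Fin m, (z (.inl (.inl j)) * (R * ξ (Fin.castAdd m (Fin.castAdd k j))) +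
        (- z (.inl (.inl j))) * (R * ξ (Fin.natAdd (m + k) j)) +
        z (.inr ()) * R * (ξ (Fin.castAdd m (Fin.castAdd k j)) ^ 2 - ξ (Fin.natAdd (m + k) j) ^ 2)) +
     ∑ j : Fin k, (z (.inl (.inr j)) * (R * ξ (Fin.castAdd m (Fin.natAdd m j))) +
        z (.inr ()) * R * ξ (Fin.castAdd m (Fin.natAdd m j)) ^ 2) := by
  have hl : ∀ i : Fin (m + k + m), (R • hypLift (m + k + m + 1) m ξ) (Fin.castSucc i) = R * ξ i := by
    intro i
    simp only [hypLift, PiLp.smul_apply, smul_eq_mul]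
    congr 1
    have : (i : ℕ) < m + k + m := i.2
    simp [this]
  have hlast : (R • hypLift (m + k + m + 1) m ξ) (Fin.last _) = R * hypQ (m + k + m + 1) m ξ := by
    simp [hypLift]
  rw [Fin.sum_univ_castSucc, Fin.sum_univ_add, Fin.sum_univ_add, hlast, hypQ_eq]
  simp only [hl, embZ_a, embZ_b, embZ_w, embZ_t]
  simp only [Finset.sum_add_distrib, Finset.mul_sum, mul_add]
  simp only [← Finset.mul_sum, mul_assoc]
  ring

lemma embZ_meas (m k : ℕ) : Measurable (embZ m k) := by
  unfold embZ
  refine (WithLp.measurable_toLp 2 _).comp ?_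
  refine measurable_pi_iff.2 fun i => ?_
  refine Fin.lastCases ?_ (fun i => ?_) i
  · simp; fun_prop
  · refine Fin.addCases (fun i => ?_) (fun i => ?_) i
    · refine Fin.addCases (fun i => ?_) (fun i => ?_) i
      · simp [Fin.append_left]; fun_prop
      · simp [Fin.append_left, Fin.append_right]; fun_prop
    · simp only [Fin.snoc_castSucc, Fin.append_right]; fun_prop

lemma norm_le_sum_abs {n : ℕ} (x : EuclideanSpace ℝ (Fin n)) (c : ℝ) (hc : 0 ≤ c) (h : ∀ i, |x i| ≤ c) :
    ‖x‖ ≤ n * c := by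
  rw [EuclideanSpace.norm_eq]
  refine Real.sqrt_le_iff.2 ⟨by positivity, ?_⟩
  calc ∑ i, ‖x i‖ ^ 2 ≤ ∑ i : Fin n, c ^ 2 := by
        gcongr with i; exact h i
    _ = n * c ^ 2 := by simp
    _ ≤ (n * c) ^ 2 := by
        rw [mul_pow]; gcongr
        rcases Nat.eq_zero_or_pos n with h | h
        · subst h; simp
        · have : (1:ℝ) ≤ n := by exact_mod_cast h
          nlinarith

lemma embZ_norm (m k : ℕ) (z) (c : ℝ) (hc : 0 ≤ c) (h : ∀ i, |z i| ≤ c) :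
    ‖embZ m k z‖ ≤ (m + k + m + 1 : ℕ) * c := by
  apply norm_le_sum_abs _ _ hc
  intro i
  refine Fin.lastCases ?_ (fun i => ?_) i
  · rw [embZ_t]; exact h _
  · refine Fin.addCases (fun i => ?_) (fun i => ?_) i
    · refine Fin.addCases (fun i => ?_) (fun i => ?_) i
      · rw [embZ_a]; exact h _
      · rw [embZ_w]; exact h _
    · rw [embZ_b, abs_neg]; exact h _

def shM (m k : ℕ) : Matrix (Fin (m + k + m)) (Fin (m + k + m)) ℝ :=
  fun i l => (if l = i then 1 else 0) - (if (l:ℕ) = i + (m + k) then 1 else 0)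

lemma shM_det (m k : ℕ) (hm : 1 ≤ m) : (shM m k).det = 1 := by
  rw [Matrix.det_of_isUpperTriangular]
  · apply Finset.prod_eq_one
    intro i _
    have : ¬ ((i:ℕ) = i + (m + k)) := by omega
    simp only [shM, if_true, if_neg this, sub_zero]
  · intro i l h
    simp only [id] at h
    have h1 : ¬ (l = i) := ne_of_lt h
    have h2 : ¬ ((l:ℕ) = i + (m + k)) := by
      have : (l:ℕ) < i := h
      omega
    simp [shM, h1, h2]

lemma shM_apply (m k : ℕ) (ξ : Fin (m + k + m) → ℝ) (i) :
    Matrix.toLin' (shM m k) ξ i = ξ i - ∑ l : Fin (m + k + m), if (l:ℕ) = i + (m + k) then ξ l else 0 := by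
  simp [Matrix.toLin'_apply, Matrix.mulVec, dotProduct, shM, sub_mul, Finset.sum_sub_distrib]

lemma shM_a (m k : ℕ) (ξ : Fin (m + k + m) → ℝ) (j : Fin m) :
    Matrix.toLin' (shM m k) ξ (Fin.castAdd m (Fin.castAdd k j)) =
      ξ (Fin.castAdd m (Fin.castAdd k j)) - ξ (Fin.natAdd (m + k) j) := by
  rw [shM_apply]
  congr 1
  rw [Finset.sum_eq_single (Fin.natAdd (m + k) j)]
  · simp [add_comm]
  · intro b _ hb
    rw [if_neg]
    intro h
    apply hb
    ext
    simp at h ⊢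
    omega
  · simp

lemma shM_o (m k : ℕ) (ξ : Fin (m + k + m) → ℝ) (i : Fin (m + k + m)) (hi : m ≤ i) :
    Matrix.toLin' (shM m k) ξ i = ξ i := by
  rw [shM_apply, Finset.sum_eq_zero, sub_zero]
  intro l _
  rw [if_neg]
  have := l.2
  omega

/-- frequency set -/
def freqS (m k : ℕ) (F : Fin (m + k + m) → Set ℝ) : Set (EuclideanSpace ℝ (Fin (m + k + m))) :=
  {ξ | ∀ i, Matrix.toLin' (shM m k) (WithLp.ofLp ξ) i ∈ F i}

lemma freqS_meas (m k : ℕ) (F : Fin (m + k + m) → Set ℝ) (hF : ∀ i, MeasurableSet (F i)) :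
    MeasurableSet (freqS m k F) := by
  have : freqS m k F = ⋂ i, (fun ξ : EuclideanSpace ℝ (Fin (m + k + m)) =>
      Matrix.toLin' (shM m k) (WithLp.ofLp ξ) i) ⁻¹' F i := by
    ext; simp [freqS]
  rw [this]
  refine MeasurableSet.iInter fun i => ?_
  have h1 : Measurable (fun ξ : Fin (m + k + m) → ℝ => Matrix.toLin' (shM m k) ξ i) :=
    (measurable_pi_apply i).comp (LinearMap.continuous_of_finiteDimensional _).measurable
  exact (h1.comp (WithLp.measurable_ofLp 2 _)) (hF i)

lemma freqS_vol (m k : ℕ) (hm : 1 ≤ m) (F : Fin (m + k + m) → Set ℝ) (hF : ∀ i, MeasurableSet (F i)) :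
    volume (freqS m k F) = ∏ i, volume (F i) := by
  have hvp := PiLp.volume_preserving_ofLp (Fin (m + k + m))
  have h1 : freqS m k F = WithLp.ofLp ⁻¹' ((Matrix.toLin' (shM m k)) ⁻¹' (Set.univ.pi F)) := by
    ext; simp [freqS]
  have hc : Continuous (Matrix.toLin' (shM m k)) := LinearMap.continuous_of_finiteDimensional _
  have hmB : MeasurableSet (Set.univ.pi F) := MeasurableSet.univ_pi hF
  rw [h1, hvp.measure_preimage (hc.measurable hmB).nullMeasurableSet,
    ← Measure.map_apply hc.measurable hmB,
    Real.map_matrix_volume_pi_eq_smul_volume_pi (by rw [shM_det m k hm]; norm_num), shM_det m k hm]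
  simp [volume_pi_pi]

lemma ftM_meas {d : ℕ} (μ : Measure (EuclideanSpace ℝ (Fin d))) [IsFiniteMeasure μ] : StronglyMeasurable (ftM μ) := by
  unfold ftM
  apply StronglyMeasurable.integral_prod_right
  apply Continuous.stronglyMeasurable
  fun_prop

lemma ftM_le {d : ℕ} (μ : Measure (EuclideanSpace ℝ (Fin d))) [IsProbabilityMeasure μ] (ζ) : ‖ftM μ ζ‖ ≤ 1 := by
  unfold ftM
  refine (norm_integral_le_of_norm_le_const (C := 1) (Filter.Eventually.of_forall fun x => ?_)).trans (by simp)
  rw [Complex.norm_exp]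
  simp

lemma ftM_ge {d : ℕ} (μ : Measure (EuclideanSpace ℝ (Fin d))) [IsProbabilityMeasure μ] (ζ)
    (h : ∀ᵐ x ∂μ, NearZ (∑ i, x i * ζ i) 1) : 1 / 2 ≤ ‖ftM μ ζ‖ := by
  refine le_trans ?_ (Complex.re_le_norm _)
  have hi : Integrable (fun x : EuclideanSpace ℝ (Fin d) => Complex.exp (-(Complex.I * (((∑ i, x i * ζ i) : ℝ) : ℂ)))) μ := by
    apply Integrable.of_bound (C := 1)
    · apply Continuous.aestronglyMeasurable; fun_prop
    · refine Filter.Eventually.of_forall fun x => ?_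
      rw [Complex.norm_exp]
      simp
  have h1 : (ftM μ ζ).re = ∫ x, (Complex.exp (-(Complex.I * (((∑ i, x i * ζ i) : ℝ) : ℂ)))).re ∂μ := by
    unfold ftM
    exact (integral_re hi).symm
  rw [h1]
  calc (1/2 : ℝ) = ∫ x, (1/2 : ℝ) ∂μ := by simp
    _ ≤ _ := by
      apply integral_mono_ae (integrable_const _) hi.re
      filter_upwards [h] with x hx
      obtain ⟨z, hz⟩ := hx
      set θ := ∑ i, x i * ζ i
      have e : (Complex.exp (-(Complex.I * (θ : ℂ)))).re = Real.cos (θ - z * (2 * Real.pi)) := by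
        rw [Real.cos_sub_int_mul_two_pi, Complex.exp_re]; simp
      change 1 / 2 ≤ (Complex.exp (-(Complex.I * (θ : ℂ)))).re
      rw [e]
      refine le_trans ?_ (Real.one_sub_sq_div_two_le_cos)
      have : (θ - z * (2 * Real.pi)) ^ 2 ≤ 1 := by
        rw [sq_le_one_iff_abs_le_one]
        rwa [mul_comm (z:ℝ)]
      linarith

lemma hypAvg_ge (d m : ℕ) (μ : Measure (EuclideanSpace ℝ (Fin d))) [IsProbabilityMeasure μ] (R : ℝ)
    (S : Set (EuclideanSpace ℝ (Fin (d - 1)))) (hS : MeasurableSet S) (hS1 : S ⊆ ball 0 1)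
    (h : ∀ ξ ∈ S, ∀ᵐ x ∂μ, NearZ (∑ i, x i * (R • hypLift d m ξ) i) 1) :
    (volume S).toReal / 4 ≤ hypAvg d m μ R := by
  have hcont : Continuous (hypLift d m) := by
    unfold hypLift
    refine (EuclideanSpace.equiv (Fin d) ℝ).symm.continuous.comp ?_
    refine continuous_pi fun i => ?_
    by_cases hi : (i:ℕ) < d - 1
    · simp only [hi, dite_true]; fun_prop
    · simp only [hi, dite_false]; unfold hypQ; fun_prop
  have hmeas : AEStronglyMeasurable (fun ξ => ‖ftM μ (R • hypLift d m ξ)‖ ^ 2 * Real.sqrt (1 + 4 * ‖ξ‖ ^ 2))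
      (volume.restrict (ball (0 : EuclideanSpace ℝ (Fin (d - 1))) 1)) := by
    apply AEStronglyMeasurable.mul
    · apply StronglyMeasurable.aestronglyMeasurable
      exact (((ftM_meas μ).comp_measurable (hcont.const_smul R).measurable).norm).pow 2
    · apply Continuous.aestronglyMeasurable; fun_prop
  have hint : IntegrableOn (fun ξ => ‖ftM μ (R • hypLift d m ξ)‖ ^ 2 * Real.sqrt (1 + 4 * ‖ξ‖ ^ 2))
      (ball (0 : EuclideanSpace ℝ (Fin (d - 1))) 1) := by
    have : IsFiniteMeasure (volume.restrict (ball (0 : EuclideanSpace ℝ (Fin (d - 1))) 1)) :=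
      ⟨by rw [Measure.restrict_apply_univ]; exact measure_ball_lt_top⟩
    refine Integrable.of_bound hmeas (1 ^ 2 * Real.sqrt (1 + 4 * 1 ^ 2)) ?_
    · filter_upwards [ae_restrict_mem measurableSet_ball] with ξ hξ
      rw [Real.norm_of_nonneg (by positivity)]
      have : ‖ξ‖ ≤ 1 := by rw [mem_ball_zero_iff] at hξ; exact hξ.le
      gcongr
      exact ftM_le μ _
  unfold hypAvg
  calc (volume S).toReal / 4 = ∫ ξ in S, (1/4 : ℝ) := by
        rw [setIntegral_const]; simp [Measure.real]; ring
    _ ≤ ∫ ξ in S, ‖ftM μ (R • hypLift d m ξ)‖ ^ 2 * Real.sqrt (1 + 4 * ‖ξ‖ ^ 2) := by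
        apply setIntegral_mono_on _ (hint.mono_set hS1) hS
        · intro ξ hξ
          have h1 := ftM_ge μ _ (h ξ hξ)
          have h2 : 1 ≤ Real.sqrt (1 + 4 * ‖ξ‖ ^ 2) := by
            rw [Real.one_le_sqrt]; nlinarith [sq_nonneg ‖ξ‖]
          calc (1/4 : ℝ) = (1/2) ^ 2 * 1 := by norm_num
            _ ≤ _ := by gcongr
        · exact integrableOn_const (ne_top_of_le_ne_top measure_ball_lt_top.ne (measure_mono hS1))
    _ ≤ _ := by
        apply setIntegral_mono_set hint
        · exact Filter.Eventually.of_forall fun ξ => by positivity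
        · exact hS1.eventuallyLE

lemma floor_facts (c L : ℝ) (hL0 : 0 < L) (hL : L ≤ c) :
    0 < ⌊c / L⌋₊ ∧ (⌊c / L⌋₊ : ℝ) * L ≤ c ∧ c ≤ 2 * ⌊c / L⌋₊ * L := by
  have h1 : 1 ≤ c / L := (one_le_div hL0).2 hL
  have h2 : 0 < ⌊c / L⌋₊ := Nat.floor_pos.2 h1
  refine ⟨h2, ?_, ?_⟩
  · rw [← le_div_iff₀ hL0]; exact Nat.floor_le (by linarith)
  · have h3 := (Nat.lt_floor_add_one (c / L)).le
    have h4 : (1:ℝ) ≤ ⌊c / L⌋₊ := by exact_mod_cast h2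
    rw [div_le_iff₀ hL0] at h3
    nlinarith

lemma lat_bound (R c q σ : ℝ) (hR : 1 < R) (hc : 0 < c) (hc1 : c ≤ 1) (hq : 1 ≤ q) (hσ : 0 ≤ σ)
    (hL : q * R ^ (σ - 1) ≤ c) (x r : ℝ) (hr : 0 < r) :
    latM (q * R ^ (σ - 1)) ⌊c / (q * R ^ (σ - 1))⌋₊ (c / R) (closedBall x r) ≤
      ENNReal.ofReal (20 * q / c ^ 2 * min (r * R ^ σ) (r + R ^ (σ - 1))) := by
  have hR0 : 0 < R := by linarith
  have e : R ^ (σ - 1) = R ^ σ / R := by rw [Real.rpow_sub hR0, Real.rpow_one]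
  have hRσ : 1 ≤ R ^ σ := Real.one_le_rpow hR.le hσ
  have hδ : c / R ≤ q * R ^ (σ - 1) := by
    rw [e, ← mul_div_assoc]
    gcongr
    nlinarith
  set L := q * R ^ (σ - 1) with hLdef
  have hL0 : 0 < L := by positivity
  obtain ⟨h1, h2, h3⟩ := floor_facts c L hL0 hL
  set N := ⌊c / L⌋₊
  have hN : (0:ℝ) < N := by exact_mod_cast h1
  rw [mul_min_of_nonneg _ _ (by positivity), ENNReal.ofReal_min]
  have hinv : (N:ℝ)⁻¹ ≤ 2 * L / c := by
    rw [inv_le_comm₀ hN (by positivity), inv_div, div_le_iff₀ (by positivity)]; linarith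
  refine le_min ?_ ?_
  · refine (latM_ball1 L N (c / R) h1 (by positivity) hδ x r hr).trans (ENNReal.ofReal_le_ofReal ?_)
    calc 10 * r / (N * (c / R)) = (N:ℝ)⁻¹ * (10 * r * R / c) := by field_simp
      _ ≤ (2 * L / c) * (10 * r * R / c) := by gcongr
      _ = _ := by rw [hLdef, e]; field_simp; ring
  · refine (latM_ball2 L N (c / R) h1 (by positivity) hδ x r hr).trans (ENNReal.ofReal_le_ofReal ?_)
    calc (N:ℝ)⁻¹ * (2 * r / L + 3) ≤ (2 * L / c) * (2 * r / L + 3) := by gcongr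
      _ = (4 / c) * r + (6 * q / c) * R ^ (σ - 1) := by
          have : 2 * L / c * (2 * r / L + 3) = 4 / c * r + 6 * L / c := by field_simp; ring
          rw [this, hLdef]; ring
      _ ≤ (20 * q / c ^ 2) * r + (20 * q / c ^ 2) * R ^ (σ - 1) := by
          have hcc : c ^ 2 ≤ c := by nlinarith
          gcongr
          · linarith
          · norm_num
      _ = _ := by ring

lemma NearZ.mono {a ε ε' : ℝ} (h : NearZ a ε) (h' : ε ≤ ε') : NearZ a ε' := by
  obtain ⟨z, hz⟩ := h
  exact ⟨z, hz.trans h'⟩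

lemma NearZ_meas {d : ℕ} (ζ : EuclideanSpace ℝ (Fin d)) :
    MeasurableSet {x : EuclideanSpace ℝ (Fin d) | NearZ (∑ i, x i * ζ i) 1} := by
  have : {x : EuclideanSpace ℝ (Fin d) | NearZ (∑ i, x i * ζ i) 1} =
      ⋃ z : ℤ, {x | |(∑ i, x i * ζ i) - 2 * Real.pi * z| ≤ 1} := by
    ext; simp [NearZ]
  rw [this]
  refine MeasurableSet.iUnion fun z => ?_
  exact (isClosed_le (by fun_prop) continuous_const).measurableSet

/-- the one-dimensional factors -/
def nuM (m k : ℕ) (c R κ : ℝ) : (Fin m ⊕ Fin k) ⊕ Unit → Measure ℝ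
  | .inl (.inl _) => latM c 1 c
  | .inl (.inr j) => if (j:ℕ) = 0 then latM (c * R ^ (-(1/2) : ℝ)) 1 (c * R ^ (-(1/2) : ℝ))
      else latM (2 * Real.pi / c * R ^ (κ - 1)) ⌊c / (2 * Real.pi / c * R ^ (κ - 1))⌋₊ (c / R)
  | .inr _ => latM (2 * Real.pi / c ^ 2 * R ^ (2 * κ - 1)) ⌊c / (2 * Real.pi / c ^ 2 * R ^ (2 * κ - 1))⌋₊ (c / R)

/-- one-dimensional bounds -/
def gB (m k : ℕ) (R κ r : ℝ) : (Fin m ⊕ Fin k) ⊕ Unit → ℝ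
  | .inl (.inl _) => r
  | .inl (.inr j) => if (j:ℕ) = 0 then min 1 (r * R ^ (1/2 : ℝ)) else min (r * R ^ κ) (r + R ^ (κ - 1))
  | .inr _ => min (r * R ^ (2 * κ)) (r + R ^ (2 * κ - 1))

/-- frequency factors -/
def fS (m k : ℕ) (c R κ : ℝ) : Fin (m + k + m) → Set ℝ :=
  Fin.append (Fin.append (fun _ => Set.Ico 0 (c / R)) (fun j : Fin k => if (j:ℕ) = 0 then Set.Ico 0 (c * R ^ (-(1/2) : ℝ))
    else latS (c * R ^ (-κ)) ⌊c / (c * R ^ (-κ))⌋₊ (c / R))) (fun _ => Set.Ico 0 c)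

def fL (m k : ℕ) (R κ : ℝ) : Fin (m + k + m) → ℝ :=
  Fin.append (Fin.append (fun _ => R⁻¹) (fun j : Fin k => if (j:ℕ) = 0 then R ^ (-(1/2) : ℝ)
    else R ^ (κ - 1))) (fun _ => 1)

section
variable (m k : ℕ) (c R κ : ℝ) (hR : 1 < R) (hc : 0 < c) (hc1 : c ≤ 1) (hκ : 0 ≤ κ) (hκ1 : κ ≤ 1/4)
  (hRc : 2 * Real.pi / c ^ 3 ≤ R ^ (1/2 : ℝ))

include hR hc hc1 hκ hκ1 hRc

lemma L_facts : 2 * Real.pi / c * R ^ (κ - 1) ≤ c ∧ 2 * Real.pi / c ^ 2 * R ^ (2 * κ - 1) ≤ c := by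
  have hR0 : 0 < R := by linarith
  have h1 : R ^ (κ - 1) ≤ R ^ (-(1/2) : ℝ) := Real.rpow_le_rpow_of_exponent_le hR.le (by linarith)
  have h2 : R ^ (2 * κ - 1) ≤ R ^ (-(1/2) : ℝ) := Real.rpow_le_rpow_of_exponent_le hR.le (by linarith)
  have h3 : 2 * Real.pi / c ^ 2 * R ^ (-(1/2) : ℝ) ≤ c := by
    rw [Real.rpow_neg hR0.le, ← div_eq_mul_inv, div_le_iff₀ (by positivity)]
    calc 2 * Real.pi / c ^ 2 = c * (2 * Real.pi / c ^ 3) := by field_simp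
      _ ≤ _ := by gcongr
  constructor
  · calc _ ≤ 2 * Real.pi / c ^ 2 * R ^ (-(1/2) : ℝ) := by
          have hcc : c ^ 2 ≤ c := by nlinarith
          gcongr
      _ ≤ _ := h3
  · exact le_trans (by gcongr) h3

lemma delta_facts : c / R ≤ 2 * Real.pi / c * R ^ (κ - 1) ∧ c / R ≤ 2 * Real.pi / c ^ 2 * R ^ (2 * κ - 1) ∧
    1 ≤ 2 * Real.pi / c ∧ 1 ≤ 2 * Real.pi / c ^ 2 := by
  have hR0 : 0 < R := by linarith
  have hpi := Real.pi_gt_three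
  have hcc : c ^ 2 ≤ 1 := pow_le_one₀ hc.le hc1
  have q1 : 1 ≤ 2 * Real.pi / c := by rw [le_div_iff₀ hc]; linarith
  have q2 : 1 ≤ 2 * Real.pi / c ^ 2 := by rw [le_div_iff₀ (by positivity)]; linarith
  have h : ∀ σ : ℝ, 0 ≤ σ → c / R ≤ R ^ (σ - 1) := by
    intro σ hσ
    rw [Real.rpow_sub hR0, Real.rpow_one]
    gcongr
    exact hc1.trans (Real.one_le_rpow hR.le hσ)
  refine ⟨?_, ?_, q1, q2⟩
  · exact (h κ hκ).trans (le_mul_of_one_le_left (by positivity) q1)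
  · exact (h (2 * κ) (by linarith)).trans (le_mul_of_one_le_left (by positivity) q2)

lemma nuM_prob (i) : IsProbabilityMeasure (nuM m k c R κ i) := by
  have hR0 : 0 < R := by linarith
  obtain ⟨hL1, hL2⟩ := L_facts c R κ hR hc hc1 hκ hκ1 hRc
  rcases i with (j | j) | j
  · exact latM_prob _ _ _ one_pos hc
  · simp only [nuM]
    split_ifs
    · exact latM_prob _ _ _ one_pos (by positivity)
    · exact latM_prob _ _ _ (floor_facts _ _ (by positivity) hL1).1 (by positivity)
  · exact latM_prob _ _ _ (floor_facts _ _ (by positivity) hL2).1 (by positivity)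

lemma nuM_ball (i) (x r : ℝ) (hr : 0 < r) :
    nuM m k c R κ i (closedBall x r) ≤ ENNReal.ofReal (140 / c ^ 4 * gB m k R κ r i) := by
  have hR0 : 0 < R := by linarith
  obtain ⟨hL1, hL2⟩ := L_facts c R κ hR hc hc1 hκ hκ1 hRc
  obtain ⟨hδ1, hδ2, hq1, hq2⟩ := delta_facts c R κ hR hc hc1 hκ hκ1 hRc
  have hpi := Real.pi_lt_d2
  have hcc : c ^ 4 ≤ c := by
    calc c ^ 4 ≤ c ^ 1 := pow_le_pow_of_le_one hc.le hc1 (by norm_num)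
      _ = c := pow_one c
  have hcc3 : c ^ 4 ≤ c ^ 3 := pow_le_pow_of_le_one hc.le hc1 (by norm_num)
  have hp := nuM_prob m k c R κ hR hc hc1 hκ hκ1 hRc i
  rcases i with (j | j) | j
  · refine (latM_ball1 c 1 c one_pos hc le_rfl x r hr).trans (ENNReal.ofReal_le_ofReal ?_)
    simp only [gB]
    rw [mul_div_right_comm]
    push_cast
    rw [one_mul]
    gcongr
    norm_num
  · simp only [nuM, gB] at hp ⊢
    split_ifs with hj
    · rw [mul_min_of_nonneg _ _ (by positivity), ENNReal.ofReal_min]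
      rw [if_pos hj] at hp
      refine le_min ?_ ?_
      · refine prob_le_one.trans ?_
        rw [ENNReal.one_le_ofReal, mul_one, le_div_iff₀ (by positivity)]
        linarith
      · refine (latM_ball1 _ 1 _ one_pos (by positivity) le_rfl x r hr).trans (ENNReal.ofReal_le_ofReal ?_)
        rw [Real.rpow_neg hR0.le]
        calc _ = 10 / c * (r * R ^ (1/2 : ℝ)) := by push_cast; field_simp
          _ ≤ _ := by gcongr; norm_num
    · refine (lat_bound R c _ κ hR hc hc1 hq1 hκ hL1 x r hr).trans (ENNReal.ofReal_le_ofReal ?_)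
      have : 0 < min (r * R ^ κ) (r + R ^ (κ - 1)) := lt_min (by positivity) (by positivity)
      gcongr ?_ * _
      calc 20 * (2 * Real.pi / c) / c ^ 2 = (40 * Real.pi) / c ^ 3 := by field_simp; norm_num
        _ ≤ _ := by gcongr; linarith
  · refine (lat_bound R c _ (2 * κ) hR hc hc1 hq2 (by linarith) hL2 x r hr).trans (ENNReal.ofReal_le_ofReal ?_)
    have : 0 < min (r * R ^ (2 * κ)) (r + R ^ (2 * κ - 1)) := lt_min (by positivity) (by positivity)
    simp only [gB]
    gcongr ?_ * _
    calc 20 * (2 * Real.pi / c ^ 2) / c ^ 2 = (40 * Real.pi) / c ^ 4 := by field_simp; norm_num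
      _ ≤ _ := by gcongr; linarith

lemma fS_meas (i) : MeasurableSet (fS m k c R κ i) := by
  unfold fS
  refine Fin.addCases (fun i => ?_) (fun i => ?_) i
  · refine Fin.addCases (fun i => ?_) (fun i => ?_) i
    · simp only [Fin.append_left]; exact measurableSet_Ico
    · simp only [Fin.append_left, Fin.append_right]
      split_ifs
      · exact measurableSet_Ico
      · exact latS_meas _ _ _
  · simp only [Fin.append_right]; exact measurableSet_Ico

lemma A_facts : c / R ≤ c * R ^ (-κ) ∧ c * R ^ (-κ) ≤ c := by
  have hR0 : 0 < R := by linarith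
  constructor
  · rw [div_eq_mul_inv, ← Real.rpow_neg_one]
    gcongr
    · exact hR.le
    · linarith
  · exact mul_le_of_le_one_right hc.le (Real.rpow_le_one_of_one_le_of_nonpos hR.le (by linarith))

lemma fS_vol (i) : ENNReal.ofReal (c ^ 2 / 2 * fL m k R κ i) ≤ volume (fS m k c R κ i) := by
  have hR0 : 0 < R := by linarith
  have hcc : c ^ 2 / 2 ≤ c := by nlinarith
  obtain ⟨hA1, hA2⟩ := A_facts c R κ hR hc hc1 hκ hκ1 hRc
  unfold fS fL
  refine Fin.addCases (fun i => ?_) (fun i => ?_) i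
  · refine Fin.addCases (fun i => ?_) (fun i => ?_) i
    · simp only [Fin.append_left, Real.volume_Ico, sub_zero]
      apply ENNReal.ofReal_le_ofReal
      rw [div_eq_mul_inv c]; gcongr
    · simp only [Fin.append_left, Fin.append_right]
      split_ifs
      · simp only [Real.volume_Ico, sub_zero]
        apply ENNReal.ofReal_le_ofReal
        gcongr
      · rw [latS_vol _ _ _ (by positivity) hA1]
        apply ENNReal.ofReal_le_ofReal
        obtain ⟨h1, h2, h3⟩ := floor_facts c (c * R ^ (-κ)) (by positivity) hA2
        set N := ⌊c / (c * R ^ (-κ))⌋₊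
        have h4 : R ^ κ ≤ 2 * N := by
          rw [Real.rpow_neg hR0.le] at h3
          have : c * R ^ κ ≤ c * (2 * N) := by
            calc c * R ^ κ ≤ (2 * N * (c * (R ^ κ)⁻¹)) * R ^ κ := by gcongr
              _ = _ := by field_simp
          exact le_of_mul_le_mul_left this hc
        rw [Real.rpow_sub hR0, Real.rpow_one]
        calc c ^ 2 / 2 * (R ^ κ / R) ≤ c ^ 2 / 2 * (2 * N / R) := by gcongr
          _ = c * (N * (c / R)) := by ring
          _ ≤ 1 * (N * (c / R)) := by gcongr
          _ = _ := by ring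
  · simp only [Fin.append_right, Real.volume_Ico, sub_zero]
    apply ENNReal.ofReal_le_ofReal
    linarith

lemma nuM_supp (i) : ∀ᵐ x ∂(nuM m k c R κ i), 0 ≤ x ∧ x ≤ c := by
  have hR0 : 0 < R := by linarith
  obtain ⟨hL1, hL2⟩ := L_facts c R κ hR hc hc1 hκ hκ1 hRc
  obtain ⟨hδ1, hδ2, hq1, hq2⟩ := delta_facts c R κ hR hc hc1 hκ hκ1 hRc
  have key : ∀ L : ℝ, ∀ N : ℕ, ∀ δ, 0 < L → δ ≤ L → N * L ≤ c →
      ∀ᵐ x ∂(latM L N δ), 0 ≤ x ∧ x ≤ c := by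
    intro L N δ hL hδ hN
    filter_upwards [latM_supp L N δ] with x hx
    obtain ⟨l, hl, s, hs0, hs1, rfl⟩ := hx
    refine ⟨by positivity, ?_⟩
    have : (l:ℝ) + 1 ≤ N := by exact_mod_cast hl
    nlinarith
  rcases i with (j | j) | j
  · exact key _ _ _ hc le_rfl (by simp)
  · simp only [nuM]
    split_ifs
    · refine key _ _ _ (by positivity) le_rfl ?_
      push_cast
      rw [one_mul]
      exact mul_le_of_le_one_right hc.le (Real.rpow_le_one_of_one_le_of_nonpos hR.le (by norm_num))
    · exact key _ _ _ (by positivity) hδ1 (floor_facts _ _ (by positivity) hL1).2.1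
  · exact key _ _ _ (by positivity) hδ2 (floor_facts _ _ (by positivity) hL2).2.1

end

lemma gB_nonneg (m k : ℕ) (R κ r : ℝ) (hR : 1 < R) (hr : 0 < r) (i) : 0 ≤ gB m k R κ r i := by
  have hR0 : 0 < R := by linarith
  rcases i with (j | j) | j
  · exact hr.le
  · simp only [gB]
    split_ifs
    · exact le_min zero_le_one (by positivity)
    · exact le_min (by positivity) (by positivity)
  · exact le_min (by positivity) (by positivity)

lemma fL_nonneg (m k : ℕ) (R κ : ℝ) (hR : 1 < R) (i) : 0 ≤ fL m k R κ i := by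
  have hR0 : 0 < R := by linarith
  unfold fL
  refine Fin.addCases (fun i => ?_) (fun i => ?_) i
  · refine Fin.addCases (fun i => ?_) (fun i => ?_) i
    · simp only [Fin.append_left]; positivity
    · simp only [Fin.append_left, Fin.append_right]
      split_ifs <;> positivity
  · simp only [Fin.append_right]; positivity

lemma construct (m k : ℕ) (hm : 1 ≤ m) (c R κ : ℝ) (hR : 1 < R) (hc : 0 < c)
    (hcD : 8 * c * (m + k + m + 1 : ℕ) = 1) (hκ : 0 ≤ κ) (hκ1 : κ ≤ 1/4)
    (hRc : 2 * Real.pi / c ^ 3 ≤ R ^ (1/2 : ℝ)) :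
    ∃ μ : Measure (EuclideanSpace ℝ (Fin (m + k + m + 1))), IsProbabilityMeasure μ ∧
      μ ((closedBall 0 1)ᶜ) = 0 ∧
      (∀ x r, 0 < r → μ (closedBall x r) ≤ ENNReal.ofReal (∏ i, (140 / c ^ 4 * gB m k R κ r i))) ∧
      (∏ i, (c ^ 2 / 2 * fL m k R κ i)) / 4 ≤ hypAvg (m + k + m + 1) m μ R := by
  have hR0 : 0 < R := by linarith
  have hD : (1:ℝ) ≤ (m + k + m + 1 : ℕ) := by exact_mod_cast Nat.le_add_left 1 _
  have hc1 : c ≤ 1 := by nlinarith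
  have hprob := nuM_prob m k c R κ hR hc hc1 hκ hκ1 hRc
  obtain ⟨hδ1, hδ2, hq1, hq2⟩ := delta_facts c R κ hR hc hc1 hκ hκ1 hRc
  obtain ⟨hA1, hA2⟩ := A_facts c R κ hR hc hc1 hκ hκ1 hRc
  have hemb := embZ_meas m k
  have hsupp : ∀ᵐ z ∂(Measure.pi (nuM m k c R κ)), ∀ i, 0 ≤ z i ∧ z i ≤ c := by
    rw [Filter.eventually_all]
    intro i
    exact (Measure.quasiMeasurePreserving_eval (μ := nuM m k c R κ) i).ae
      (nuM_supp m k c R κ hR hc hc1 hκ hκ1 hRc i)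
  have hsw : ∀ᵐ z ∂(Measure.pi (nuM m k c R κ)), ∀ j : Fin k,
      if (j:ℕ) = 0 then z (.inl (.inr j)) ≤ c * R ^ (-(1/2) : ℝ) else
        ∃ l : ℕ, ∃ s, 0 ≤ s ∧ s ≤ c / R ∧ z (.inl (.inr j)) = (2 * Real.pi / c * R ^ (κ - 1)) * l + s := by
    rw [Filter.eventually_all]
    intro j
    refine (Measure.quasiMeasurePreserving_eval (μ := nuM m k c R κ) (.inl (.inr j))).ae
      (p := fun x => if (j:ℕ) = 0 then x ≤ c * R ^ (-(1/2) : ℝ) else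
        ∃ l : ℕ, ∃ s, 0 ≤ s ∧ s ≤ c / R ∧ x = (2 * Real.pi / c * R ^ (κ - 1)) * l + s) ?_
    simp only [nuM]
    split_ifs with hj
    · filter_upwards [latM_supp (c * R ^ (-(1/2) : ℝ)) 1 (c * R ^ (-(1/2) : ℝ))] with x hx
      obtain ⟨l, hl, s, hs0, hs1, rfl⟩ := hx
      have : l = 0 := by omega
      subst this
      simpa using hs1
    · filter_upwards [latM_supp (2 * Real.pi / c * R ^ (κ - 1)) ⌊c / (2 * Real.pi / c * R ^ (κ - 1))⌋₊ (c / R)] with x hx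
      obtain ⟨l, hl, s, hs0, hs1, rfl⟩ := hx
      exact ⟨l, s, hs0, hs1, rfl⟩
  have hst : ∀ᵐ z ∂(Measure.pi (nuM m k c R κ)),
        ∃ l : ℕ, ∃ s, 0 ≤ s ∧ s ≤ c / R ∧ z (.inr ()) = (2 * Real.pi / c ^ 2 * R ^ (2 * κ - 1)) * l + s := by
    refine (Measure.quasiMeasurePreserving_eval (μ := nuM m k c R κ) (.inr ())).ae
      (p := fun x => ∃ l : ℕ, ∃ s, 0 ≤ s ∧ s ≤ c / R ∧ x = (2 * Real.pi / c ^ 2 * R ^ (2 * κ - 1)) * l + s) ?_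
    simp only [nuM]
    filter_upwards [latM_supp (2 * Real.pi / c ^ 2 * R ^ (2 * κ - 1)) ⌊c / (2 * Real.pi / c ^ 2 * R ^ (2 * κ - 1))⌋₊ (c / R)] with x hx
    obtain ⟨l, hl, s, hs0, hs1, rfl⟩ := hx
    exact ⟨l, s, hs0, hs1, rfl⟩
  have hpi : IsProbabilityMeasure (Measure.pi (nuM m k c R κ)) := inferInstance
  have hμ : IsProbabilityMeasure ((Measure.pi (nuM m k c R κ)).map (embZ m k)) :=
    Measure.isProbabilityMeasure_map hemb.aemeasurable
  refine ⟨(Measure.pi (nuM m k c R κ)).map (embZ m k), hμ, ?_, ?_, ?_⟩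
  · rw [Measure.map_apply hemb measurableSet_closedBall.compl]
    refine measure_mono_null (t := {z | ¬ ∀ i, 0 ≤ z i ∧ z i ≤ c}) ?_ hsupp
    intro z hz hz'
    apply hz
    rw [mem_closedBall_zero_iff]
    refine (embZ_norm m k z c hc.le fun i => ?_).trans ?_
    · rw [abs_of_nonneg (hz' i).1]; exact (hz' i).2
    · nlinarith
  · intro x r hr
    rw [Measure.map_apply hemb measurableSet_closedBall]
    let y : (Fin m ⊕ Fin k) ⊕ Unit → ℝ := fun i => match i with
      | .inl (.inl j) => x (Fin.castSucc (Fin.castAdd m (Fin.castAdd k j)))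
      | .inl (.inr j) => x (Fin.castSucc (Fin.castAdd m (Fin.natAdd m j)))
      | .inr _ => x (Fin.last _)
    have hsub : embZ m k ⁻¹' closedBall x r ⊆ Set.univ.pi (fun i => closedBall (y i) r) := by
      intro z hz i _
      have h1 : ∀ i, dist (embZ m k z i) (x i) ≤ r := fun i => by
        rw [Set.mem_preimage, mem_closedBall, dist_eq_norm] at hz
        refine le_trans ?_ hz
        rw [dist_eq_norm]
        exact PiLp.norm_apply_le (embZ m k z - x) i
      rw [mem_closedBall]
      rcases i with (j | j) | j
      · have := h1 (Fin.castSucc (Fin.castAdd m (Fin.castAdd k j)))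
        rwa [embZ_a] at this
      · have := h1 (Fin.castSucc (Fin.castAdd m (Fin.natAdd m j)))
        rwa [embZ_w] at this
      · have := h1 (Fin.last _)
        rwa [embZ_t] at this
    refine (measure_mono hsub).trans ?_
    rw [Measure.pi_pi, ENNReal.ofReal_prod_of_nonneg]
    · exact Finset.prod_le_prod' fun i _ => nuM_ball m k c R κ hR hc hc1 hκ hκ1 hRc i (y i) r hr
    · intro i _
      exact mul_nonneg (by positivity) (gB_nonneg m k R κ r hR hr i)
  · have hSm : MeasurableSet (freqS m k (fS m k c R κ)) :=
      freqS_meas m k _ (fS_meas m k c R κ hR hc hc1 hκ hκ1 hRc)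
    have hmem : ∀ ξ ∈ freqS m k (fS m k c R κ),
        (∀ j : Fin m, 0 ≤ ξ (Fin.castAdd m (Fin.castAdd k j)) - ξ (Fin.natAdd (m + k) j) ∧
          ξ (Fin.castAdd m (Fin.castAdd k j)) - ξ (Fin.natAdd (m + k) j) ≤ c / R) ∧
        (∀ j : Fin m, 0 ≤ ξ (Fin.natAdd (m + k) j) ∧ ξ (Fin.natAdd (m + k) j) ≤ c) ∧
        (∀ j : Fin k, 0 ≤ ξ (Fin.castAdd m (Fin.natAdd m j)) ∧ ξ (Fin.castAdd m (Fin.natAdd m j)) ≤ c) ∧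
        (∀ j : Fin k, if (j:ℕ) = 0 then ξ (Fin.castAdd m (Fin.natAdd m j)) ≤ c * R ^ (-(1/2) : ℝ) else
          ∃ l : ℕ, ∃ s, 0 ≤ s ∧ s ≤ c / R ∧ ξ (Fin.castAdd m (Fin.natAdd m j)) = (c * R ^ (-κ)) * l + s) := by
      intro ξ hξ
      have hw : ∀ j : Fin k, ξ (Fin.castAdd m (Fin.natAdd m j)) ∈
          (if (j:ℕ) = 0 then Set.Ico 0 (c * R ^ (-(1/2) : ℝ))
            else latS (c * R ^ (-κ)) ⌊c / (c * R ^ (-κ))⌋₊ (c / R)) := by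
        intro j
        have := hξ (Fin.castAdd m (Fin.natAdd m j))
        rw [shM_o _ _ _ _ (by simp), fS, Fin.append_left, Fin.append_right] at this
        exact this
      refine ⟨fun j => ?_, fun j => ?_, fun j => ?_, fun j => ?_⟩
      · have := hξ (Fin.castAdd m (Fin.castAdd k j))
        rw [shM_a, fS, Fin.append_left, Fin.append_left] at this
        exact ⟨this.1, this.2.le⟩
      · have := hξ (Fin.natAdd (m + k) j)
        rw [shM_o _ _ _ _ (by simp; omega), fS, Fin.append_right] at this
        exact ⟨this.1, this.2.le⟩
      · have := hw j
        split_ifs at this with hj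
        · refine ⟨this.1, this.2.le.trans ?_⟩
          exact mul_le_of_le_one_right hc.le (Real.rpow_le_one_of_one_le_of_nonpos hR.le (by norm_num))
        · obtain ⟨l, hl, s, hs0, hs1, e⟩ := latS_mem this
          rw [e]
          refine ⟨by positivity, ?_⟩
          have h1 := (floor_facts c (c * R ^ (-κ)) (by positivity) hA2).2.1
          have h2 : (l:ℝ) + 1 ≤ (⌊c / (c * R ^ (-κ))⌋₊ : ℝ) := by exact_mod_cast hl
          have h3 : ((l:ℝ) + 1) * (c * R ^ (-κ)) ≤ (⌊c / (c * R ^ (-κ))⌋₊ : ℝ) * (c * R ^ (-κ)) := by gcongr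
          linarith
      · have := hw j
        split_ifs at this ⊢ with hj
        · exact this.2.le
        · obtain ⟨l, hl, s, hs0, hs1, e⟩ := latS_mem this
          exact ⟨l, s, hs0, hs1, e⟩
    have hcR : c / R ≤ c := div_le_self hc.le hR.le
    have hSb : freqS m k (fS m k c R κ) ⊆ ball 0 1 := by
      intro ξ hξ
      obtain ⟨h1, h2, h3, h4⟩ := hmem ξ hξ
      rw [mem_ball_zero_iff]
      refine (norm_le_sum_abs ξ (2 * c) (by positivity) fun i => ?_).trans_lt ?_
      · refine Fin.addCases (fun i => ?_) (fun i => ?_) i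
        · refine Fin.addCases (fun i => ?_) (fun i => ?_) i
          · rw [abs_le]; constructor <;> linarith [(h1 i).1, (h1 i).2, (h2 i).1, (h2 i).2]
          · rw [abs_le]; constructor <;> linarith [(h3 i).1, (h3 i).2]
        · rw [abs_le]; constructor <;> linarith [(h2 i).1, (h2 i).2]
      · push_cast at hcD ⊢
        nlinarith
    have hge := hypAvg_ge (m + k + m + 1) m ((Measure.pi (nuM m k c R κ)).map (embZ m k)) R
      (freqS m k (fS m k c R κ)) hSm hSb ?_
    · refine le_trans ?_ hge
      gcongr
      have hfin : volume (freqS m k (fS m k c R κ)) ≠ ⊤ :=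
        ne_top_of_le_ne_top measure_ball_lt_top.ne (measure_mono hSb)
      have h0 : ENNReal.ofReal (∏ i, (c ^ 2 / 2 * fL m k R κ i)) ≤ volume (freqS m k (fS m k c R κ)) := by
        rw [freqS_vol m k hm _ (fS_meas m k c R κ hR hc hc1 hκ hκ1 hRc), ENNReal.ofReal_prod_of_nonneg]
        · exact Finset.prod_le_prod' fun i _ => fS_vol m k c R κ hR hc hc1 hκ hκ1 hRc i
        · intro i _
          exact mul_nonneg (by positivity) (fL_nonneg m k R κ hR i)
      exact (ENNReal.ofReal_le_iff_le_toReal hfin).1 h0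
    · intro ξ hξ
      obtain ⟨h1, h2, h3, h4⟩ := hmem ξ hξ
      rw [ae_map_iff hemb.aemeasurable (NearZ_meas _)]
      filter_upwards [hsupp, hsw, hst] with z hz hzw hzt
      rw [phase_eq m k R z ξ]
      have hP : NearZ (∑ j : Fin m, (z (.inl (.inl j)) * (R * ξ (Fin.castAdd m (Fin.castAdd k j))) +
        (- z (.inl (.inl j))) * (R * ξ (Fin.natAdd (m + k) j)) +
        z (.inr ()) * R * (ξ (Fin.castAdd m (Fin.castAdd k j)) ^ 2 - ξ (Fin.natAdd (m + k) j) ^ 2))) (m * (8 * c)) := by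
        apply NearZ.sum
        intro j
        have := near_pair R c (z (.inl (.inl j))) _ _ (z (.inr ())) hR hc hc1 (hz _) (h1 j) (h2 j) (hz _)
        rwa [add_sub_cancel] at this
      have hW : NearZ (∑ j : Fin k, (z (.inl (.inr j)) * (R * ξ (Fin.castAdd m (Fin.natAdd m j))) +
        z (.inr ()) * R * ξ (Fin.castAdd m (Fin.natAdd m j)) ^ 2)) (k * (8 * c)) := by
        apply NearZ.sum
        intro j
        have hzj := hzw j
        have h4j := h4 j
        split_ifs at hzj h4j with hj
        · exact near_one R c _ _ _ hR hc hc1 ⟨(hz _).1, hzj⟩ ⟨(h3 j).1, h4j⟩ (hz _)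
        · obtain ⟨l, s', hs'0, hs'1, e'⟩ := hzj
          obtain ⟨q, s, hs0, hs1, e⟩ := h4j
          obtain ⟨p, s'', hs''0, hs''1, e''⟩ := hzt
          refine near_lat R c _ _ _ _ _ _ s s' s'' l q p hR hc hc1 ?_ ?_ ?_ ?_ ?_ e' (hz _).2 e (h3 j).2 e'' (hz _).2
            ⟨hs0, hs1⟩ ⟨hs'0, hs'1⟩ ⟨hs''0, hs''1⟩
          · positivity
          · positivity
          · positivity
          · rw [Real.rpow_sub hR0, Real.rpow_neg hR0.le, Real.rpow_one]; field_simp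
          · rw [Real.rpow_sub hR0, Real.rpow_neg hR0.le, Real.rpow_one, mul_comm 2 κ, Real.rpow_mul hR0.le, Real.rpow_two]; field_simp
      refine (hP.add hW).mono ?_
      push_cast at hcD
      nlinarith [mul_nonneg hc.le (Nat.cast_nonneg (α := ℝ) m)]

lemma finish (d m : ℕ) (α β α₀ e1 e2 C c0 : ℝ) (hα : 0 < α) (h1 : α < α₀) (he1 : 0 ≤ e1) (hC : 1 ≤ C)
    (hc0 : 0 < c0) (he : e1 + e2 < β)
    (H : ∀ᶠ R : ℝ in Filter.atTop, ∃ μ : Measure (EuclideanSpace ℝ (Fin d)), IsProbabilityMeasure μ ∧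
      μ ((closedBall 0 1)ᶜ) = 0 ∧
      (∀ x r, 0 < r → μ (closedBall x r) ≤ ENNReal.ofReal (C * R ^ e1 * r ^ α₀)) ∧
      c0 * R ^ (-e2) ≤ hypAvg d m μ R) : decayFails d m α β := by
  intro Cs hCs
  obtain ⟨Ce, hCe, hE⟩ := energy_le (d := d) α α₀ hα h1
  have hT : Filter.Tendsto (fun R : ℝ => R ^ (β - e1 - e2)) Filter.atTop Filter.atTop :=
    tendsto_rpow_atTop (by linarith)
  obtain ⟨R, ⟨μ, hp, hs, hF, hA⟩, hR1, hR2⟩ := (H.and ((Filter.eventually_gt_atTop 1).and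
    (hT.eventually_gt_atTop (Cs * ((1 + Ce) * C) / c0)))).exists
  have hR0 : 0 < R := by linarith
  have hRe : 1 ≤ R ^ e1 := Real.one_le_rpow hR1.le he1
  have hen := hE μ (C * R ^ e1) hp (by positivity) hF
  refine ⟨μ, inferInstance, hs, energy_pos α μ hα, ne_top_of_le_ne_top ENNReal.ofReal_ne_top hen, R, hR1, ?_⟩
  have hen' : (energy α μ).toReal ≤ (1 + Ce) * C * R ^ e1 := by
    refine (ENNReal.toReal_le_of_le_ofReal (by positivity) hen).trans ?_
    nlinarith [mul_le_mul hC hRe (by norm_num) (by linarith)]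
  refine lt_of_lt_of_le ?_ hA
  calc Cs * R ^ (-β) * (energy α μ).toReal ≤ Cs * R ^ (-β) * ((1 + Ce) * C * R ^ e1) := by gcongr
    _ = (Cs * ((1 + Ce) * C)) * (R ^ (-β) * R ^ e1) := by ring
    _ < (c0 * R ^ (β - e1 - e2)) * (R ^ (-β) * R ^ e1) := by
        rw [div_lt_iff₀ hc0] at hR2
        exact mul_lt_mul_of_pos_right (by linarith) (by positivity)
    _ = c0 * R ^ (-e2) := by
        rw [← Real.rpow_add hR0, mul_assoc, ← Real.rpow_add hR0]
        congr 2; ring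

lemma lam_bound (R r σ : ℝ) (hR : 1 < R) (hr : 0 < r) (hr1 : r ≤ R ^ (-(1/2) : ℝ)) (hσ : 0 ≤ σ) (hσ1 : σ ≤ 1/2) :
    min (r * R ^ σ) (r + R ^ (σ - 1)) ≤ 2 * (r ^ (1 - 2 * σ) * R ^ (-σ)) := by
  have hR0 : 0 < R := by linarith
  have er : r = r ^ (1 - 2 * σ) * r ^ (2 * σ) := by
    rw [← Real.rpow_add hr]; simp
  have hp : 0 < r ^ (1 - 2 * σ) * R ^ (-σ) := by positivity
  rcases le_total r (R⁻¹) with h | h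
  · refine (min_le_left _ _).trans ?_
    have h2 : r ^ (2 * σ) ≤ R ^ (-(2 * σ)) := by
      rw [Real.rpow_neg hR0.le, ← Real.inv_rpow hR0.le]
      exact Real.rpow_le_rpow hr.le h (by linarith)
    calc r * R ^ σ = r ^ (1 - 2 * σ) * r ^ (2 * σ) * R ^ σ := by rw [← er]
      _ ≤ r ^ (1 - 2 * σ) * R ^ (-(2 * σ)) * R ^ σ := by gcongr
      _ = r ^ (1 - 2 * σ) * R ^ (-σ) := by
          rw [mul_assoc, ← Real.rpow_add hR0]; congr 2; ring
      _ ≤ _ := by linarith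
  · refine (min_le_right _ _).trans ?_
    have h2 : r ^ (2 * σ) ≤ R ^ (-σ) := by
      calc r ^ (2 * σ) ≤ (R ^ (-(1/2) : ℝ)) ^ (2 * σ) := Real.rpow_le_rpow hr.le hr1 (by linarith)
        _ = _ := by rw [← Real.rpow_mul hR0.le]; congr 1; ring
    have h3 : r ≤ r ^ (1 - 2 * σ) * R ^ (-σ) := by
      calc r = r ^ (1 - 2 * σ) * r ^ (2 * σ) := er
        _ ≤ _ := by gcongr
    have h4 : R ^ (σ - 1) ≤ r ^ (1 - 2 * σ) * R ^ (-σ) := by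
      calc R ^ (σ - 1) = (R⁻¹) ^ (1 - 2 * σ) * R ^ (-σ) := by
            rw [Real.inv_rpow hR0.le, ← Real.rpow_neg hR0.le, ← Real.rpow_add hR0]; congr 1; ring
        _ ≤ _ := by gcongr; linarith
    linarith

lemma prod_g (m k : ℕ) (C R κ r : ℝ) : ∏ i, (C * gB m k R κ r i) = C ^ (m + k + 1) *
    (r ^ m * (∏ j : Fin k, if (j:ℕ) = 0 then min 1 (r * R ^ (1/2 : ℝ)) else min (r * R ^ κ) (r + R ^ (κ - 1))) *
      min (r * R ^ (2 * κ)) (r + R ^ (2 * κ - 1))) := by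
  rw [Finset.prod_mul_distrib]
  congr 1
  · simp
  · rw [Fintype.prod_sum_type, Fintype.prod_sum_type]
    simp [gB]

lemma prod_f (m k : ℕ) (C R κ : ℝ) : ∏ i, (C * fL m k R κ i) = C ^ (m + k + m) *
    ((R⁻¹) ^ m * (∏ j : Fin k, if (j:ℕ) = 0 then R ^ (-(1/2) : ℝ) else R ^ (κ - 1))) := by
  rw [Finset.prod_mul_distrib]
  congr 1
  · simp
  · rw [Fin.prod_univ_add, Fin.prod_univ_add]
    simp only [fL, Fin.append_left, Fin.append_right]
    simp

lemma frost (m k : ℕ) (R κ r α' : ℝ) (hR : 1 < R) (hr : 0 < r) (h1 : (k:ℝ) + 1 ≤ α') (h2 : α' < (k:ℝ) + 2)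
    (hκ : κ = ((k:ℝ) + 2 - α') / (2 * ((k:ℝ) + 2))) (hr1 : r ≤ 1) :
    r ^ m * (min 1 (r * R ^ (1/2 : ℝ)) * min (r * R ^ κ) (r + R ^ (κ - 1)) ^ k) *
      min (r * R ^ (2 * κ)) (r + R ^ (2 * κ - 1)) ≤ 2 ^ (k + 1) * R ^ ((α' - (k:ℝ) - 1) / 2) * r ^ ((m:ℝ) + α') := by
  have hR0 : 0 < R := by linarith
  have hκn : 2 * κ * ((k:ℝ) + 2) = (k:ℝ) + 2 - α' := by rw [hκ]; field_simp
  have hκ0 : 0 ≤ κ := by rw [hκ]; apply div_nonneg <;> [linarith; positivity]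
  have hκ1 : κ ≤ 1/4 := by
    have : (0:ℝ) ≤ k := Nat.cast_nonneg k
    nlinarith
  have p1 : 0 < min (r * R ^ κ) (r + R ^ (κ - 1)) := lt_min (by positivity) (by positivity)
  have p2 : 0 < min (r * R ^ (2 * κ)) (r + R ^ (2 * κ - 1)) := lt_min (by positivity) (by positivity)
  have p3 : 0 < min 1 (r * R ^ (1/2 : ℝ)) := lt_min one_pos (by positivity)
  rcases le_total r (R ^ (-(1/2) : ℝ)) with h | h
  · have a1 := lam_bound R r κ hR hr h hκ0 (by linarith)
    have a2 := lam_bound R r (2 * κ) hR hr h (by linarith) (by linarith)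
    calc _ ≤ r ^ m * ((r * R ^ (1/2 : ℝ)) * (2 * (r ^ (1 - 2 * κ) * R ^ (-κ))) ^ k) *
        (2 * (r ^ (1 - 2 * (2 * κ)) * R ^ (-(2 * κ)))) := by
          gcongr
          exact min_le_right _ _
      _ = 2 ^ (k + 1) * (R ^ (1/2 : ℝ) * (R ^ (-κ)) ^ k * R ^ (-(2 * κ))) *
          (r ^ m * r * (r ^ (1 - 2 * κ)) ^ k * r ^ (1 - 2 * (2 * κ))) := by
          rw [mul_pow, mul_pow]; ring
      _ = _ := by
          congr 1
          · congr 1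
            rw [← Real.rpow_mul_natCast hR0.le, ← Real.rpow_add hR0, ← Real.rpow_add hR0]
            congr 1
            linarith
          · rw [← Real.rpow_mul_natCast hr.le, ← Real.rpow_natCast r m, ← Real.rpow_add_one hr.ne', ← Real.rpow_add hr, ← Real.rpow_add hr]
            congr 1
            linarith
  · have b1 : R ^ (κ - 1) ≤ r := (Real.rpow_le_rpow_of_exponent_le hR.le (by linarith)).trans h
    have b2 : R ^ (2 * κ - 1) ≤ r := (Real.rpow_le_rpow_of_exponent_le hR.le (by linarith)).trans h
    have a1 : min (r * R ^ κ) (r + R ^ (κ - 1)) ≤ 2 * r := (min_le_right _ _).trans (by linarith)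
    have a2 : min (r * R ^ (2 * κ)) (r + R ^ (2 * κ - 1)) ≤ 2 * r := (min_le_right _ _).trans (by linarith)
    calc _ ≤ r ^ m * (1 * (2 * r) ^ k) * (2 * r) := by
          gcongr
          exact min_le_left _ _
      _ = 2 ^ (k + 1) * (r ^ (-(α' - (k:ℝ) - 1)) * r ^ ((m:ℝ) + α')) := by
          rw [← Real.rpow_add hr, show -(α' - (k:ℝ) - 1) + ((m:ℝ) + α') = ((m + k + 1 : ℕ) : ℝ) by push_cast; ring,
            Real.rpow_natCast, mul_pow]
          ring
      _ ≤ 2 ^ (k + 1) * (R ^ ((α' - (k:ℝ) - 1) / 2) * r ^ ((m:ℝ) + α')) := by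
          gcongr
          calc r ^ (-(α' - (k:ℝ) - 1)) ≤ (R ^ (-(1/2) : ℝ)) ^ (-(α' - (k:ℝ) - 1)) :=
                Real.rpow_le_rpow_of_nonpos (by positivity) h (by linarith)
            _ = _ := by rw [← Real.rpow_mul hR0.le]; congr 1; ring
      _ = _ := by ring

lemma main_k (m k : ℕ) (hm : 1 ≤ m) (α β α₀ : ℝ) (hα1 : (m:ℝ) + k ≤ α) (h1 : α < α₀)
    (h2 : α₀ < (m:ℝ) + k + 1) (hβ : α₀ - (α₀ - m) / ((k:ℝ) + 1) < β) :
    decayFails (m + k + m + 1) m α β := by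
  have hD : (0:ℝ) < (m + k + m + 1 : ℕ) := by positivity
  set c : ℝ := 1 / (8 * (m + k + m + 1 : ℕ)) with hcdef
  have hc : 0 < c := by positivity
  have hcD : 8 * c * (m + k + m + 1 : ℕ) = 1 := by rw [hcdef]; field_simp
  have hc1 : c ≤ 1 := by
    have : (1:ℝ) ≤ (m + k + m + 1 : ℕ) := by exact_mod_cast Nat.le_add_left 1 _
    nlinarith
  have hm' : (1:ℝ) ≤ m := by exact_mod_cast hm
  have hk' : (0:ℝ) ≤ k := Nat.cast_nonneg k
  have hC1 : 1 ≤ 140 / c ^ 4 := by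
    rw [le_div_iff₀ (by positivity)]
    have : c ^ 4 ≤ 1 := pow_le_one₀ hc.le hc1
    linarith
  have hev : ∀ᶠ R : ℝ in Filter.atTop, 1 < R ∧ 2 * Real.pi / c ^ 3 ≤ R ^ (1/2 : ℝ) :=
    (Filter.eventually_gt_atTop 1).and ((tendsto_rpow_atTop (by norm_num)).eventually_ge_atTop _)
  rcases k with _ | k
  · refine finish _ m α β α₀ 0 m ((140 / c ^ 4) ^ (m + 0 + 1)) ((c ^ 2 / 2) ^ (m + 0 + m) / 4) (by linarith) h1 le_rfl
      (one_le_pow₀ hC1) (by positivity) ?_ ?_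
    · push_cast at hβ; simp at hβ; linarith
    · filter_upwards [hev] with R ⟨hR, hRc⟩
      have hR0 : 0 < R := by linarith
      obtain ⟨μ, hp, hs, hF, hA⟩ := construct m 0 hm c R 0 hR hc hcD le_rfl (by norm_num) hRc
      refine ⟨μ, hp, hs, fun x r hr => ?_, ?_⟩
      · rcases le_total r 1 with hr1 | hr1
        · refine (hF x r hr).trans (ENNReal.ofReal_le_ofReal ?_)
          have e0 : ∀ t C : ℝ, C * R ^ (0:ℝ) * t = C * t := fun t C => by
            rw [Real.rpow_zero, mul_one]
          rw [prod_g, e0]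
          refine mul_le_mul_of_nonneg_left ?_ (by positivity)
          simp only [Finset.univ_eq_empty, Finset.prod_empty, mul_one]
          calc _ ≤ r ^ m * r := by
                refine mul_le_mul_of_nonneg_left ?_ (by positivity)
                refine (min_le_left _ _).trans ?_
                simp
            _ = r ^ ((m + 1 : ℕ) : ℝ) := by rw [Real.rpow_natCast]; ring
            _ ≤ _ := Real.rpow_le_rpow_of_exponent_ge hr hr1 (by push_cast at h2 ⊢; linarith)
        · refine prob_le_one.trans ?_
          rw [ENNReal.one_le_ofReal, Real.rpow_zero, mul_one]
          exact one_le_mul_of_one_le_of_one_le (one_le_pow₀ hC1) (Real.one_le_rpow hr1 (by push_cast at hα1; linarith))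
      · refine le_trans (le_of_eq ?_) hA
        rw [prod_f, Real.rpow_neg hR0.le, Real.rpow_natCast]
        simp
        ring
  · push_cast at hα1 h2 hβ
    have hk0 : (0:ℝ) ≤ k := Nat.cast_nonneg k
    set κ : ℝ := ((k:ℝ) + 2 - (α₀ - m)) / (2 * ((k:ℝ) + 2)) with hκ
    have hκn : 2 * κ * ((k:ℝ) + 2) = (k:ℝ) + 2 - (α₀ - m) := by rw [hκ]; field_simp
    have hκ0 : 0 ≤ κ := by rw [hκ]; apply div_nonneg <;> [linarith; positivity]
    have hκ1 : κ ≤ 1/4 := by nlinarith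
    refine finish _ m α β α₀ ((α₀ - m - k - 1) / 2) (m + 1/2 + (1 - κ) * k)
      ((140 / c ^ 4) ^ (m + (k + 1) + 1) * 2 ^ (k + 1)) ((c ^ 2 / 2) ^ (m + (k + 1) + m) / 4) (by linarith) h1 (by linarith)
      (one_le_mul_of_one_le_of_one_le (one_le_pow₀ hC1) (one_le_pow₀ (by norm_num))) (by positivity) ?_ ?_
    · refine lt_of_eq_of_lt ?_ hβ
      rw [hκ]; field_simp; ring
    · filter_upwards [hev] with R ⟨hR, hRc⟩
      have hR0 : 0 < R := by linarith
      obtain ⟨μ, hp, hs, hF, hA⟩ := construct m (k + 1) hm c R κ hR hc hcD hκ0 hκ1 hRc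
      refine ⟨μ, hp, hs, fun x r hr => ?_, ?_⟩
      · rcases le_total r 1 with hr1 | hr1
        · refine (hF x r hr).trans (ENNReal.ofReal_le_ofReal ?_)
          have := frost m k R κ r (α₀ - m) hR hr (by linarith) (by linarith) hκ hr1
          rw [add_sub_cancel] at this
          rw [prod_g, Fin.prod_univ_succ]
          simp only [Fin.val_zero, if_true, Fin.val_succ, Nat.add_eq_zero_iff, one_ne_zero, and_false, if_false,
            Finset.prod_const, Finset.card_univ, Fintype.card_fin]
          rw [mul_assoc ((140 / c ^ 4) ^ (m + (k + 1) + 1)), mul_assoc ((140 / c ^ 4) ^ (m + (k + 1) + 1))]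
          gcongr
        · refine prob_le_one.trans ?_
          rw [ENNReal.one_le_ofReal]
          refine one_le_mul_of_one_le_of_one_le (one_le_mul_of_one_le_of_one_le
            (one_le_mul_of_one_le_of_one_le (one_le_pow₀ hC1) (one_le_pow₀ (by norm_num))) ?_) ?_
          · exact Real.one_le_rpow hR.le (by linarith)
          · exact Real.one_le_rpow hr1 (by linarith)
      · refine le_trans (le_of_eq ?_) hA
        rw [prod_f, Fin.prod_univ_succ]
        simp only [Fin.val_zero, if_true, Fin.val_succ, Nat.add_eq_zero_iff, one_ne_zero, and_false, if_false,
            Finset.prod_const, Finset.card_univ, Fintype.card_fin]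
        rw [← Real.rpow_mul_natCast hR0.le, inv_pow, ← Real.rpow_natCast R m, ← Real.rpow_neg hR0.le,
          ← Real.rpow_add hR0, ← Real.rpow_add hR0,
          show -((m:ℝ) + 1/2 + (1 - κ) * k) = -(m:ℝ) + (-(1/2) + (κ - 1) * k) by ring]
        ring

/-- if `d-m-1 <= a < d-m`, then for every `b > a - (a-m)/(d-2m)` the decay
estimate fails, i.e. `beta(a, H_m^{d-1}) <= a - (a-m)/(d-2m)`. -/
theorem statement0 (d m : ℕ) (hd : 3 ≤ d) (hm1 : 1 ≤ m) (hm2 : 2 * m ≤ d - 1)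
    (α : ℝ) (hα1 : (d : ℝ) - m - 1 ≤ α) (hα2 : α < (d : ℝ) - m)
    (β : ℝ) (hβ : α - (α - m) / ((d : ℝ) - 2 * m) < β) :
    decayFails d m α β := by
  obtain ⟨k, rfl⟩ : ∃ k, d = m + k + m + 1 := ⟨d - 1 - 2 * m, by omega⟩
  push_cast at hα1 hα2 hβ
  have hk : (0:ℝ) ≤ k := Nat.cast_nonneg k
  rw [show (m:ℝ) + k + m + 1 - 2 * m = (k:ℝ) + 1 by ring] at hβ
  set g := β - (α - (α - m) / ((k:ℝ) + 1)) with hg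
  set α₀ := α + min (g / 2) (((m:ℝ) + k + 1 - α) / 2) with hα₀
  have hpos : 0 < min (g / 2) (((m:ℝ) + k + 1 - α) / 2) := lt_min (by linarith) (by linarith)
  have hle1 := min_le_left (g / 2) (((m:ℝ) + k + 1 - α) / 2)
  have hle2 := min_le_right (g / 2) (((m:ℝ) + k + 1 - α) / 2)
  refine main_k m k hm1 α β α₀ (by linarith) (by linarith) (by linarith) ?_
  have : (α - m) / ((k:ℝ) + 1) ≤ (α₀ - m) / ((k:ℝ) + 1) := by gcongr; linarith
  linarith
end
end

section
/- Suppose 0 < α < (d−1)/2. Then β(α, H_m^{d−1}) = α in the following sense: (i) for every β with 0 < β < α there exists a constant C_β such that for every μ ∈ M_d and every R > 1, ∫_{B^{d−1}(0,1)} |μ̂(R(ξ, ⟨Mξ,ξ⟩))|² √(1+4|ξ|²) dξ ≤ C_β R^{−β} I_α(μ); and (ii) for every β > α and every C > 0 there exist μ ∈ M_d with 0 < I_α(μ) < ∞ and R > 1 such that ∫_{B^{d−1}(0,1)} |μ̂(R(ξ, ⟨Mξ,ξ⟩))|² √(1+4|ξ|²) dξ > C R^{−β} I_α(μ). -/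
open MeasureTheory Metric
open scoped ENNReal NNReal

noncomputable section

lemma aux_sum (n m : ℕ) (w : EuclideanSpace ℝ (Fin (n+1))) (ξ : EuclideanSpace ℝ (Fin (n+1-1))) :
    ∑ i, w i * hypLift (n+1) m ξ i
      = (∑ j : Fin (n+1-1), w (Fin.castSucc (n := n) j) * ξ j)
        + w (Fin.last n) * hypQ (n+1) m ξ := by
  rw [Fin.sum_univ_castSucc]
  congr 1
  · apply Finset.sum_congr rfl
    intro j _
    simp [hypLift]
  · simp [hypLift]

lemma aux_cont_lift (d m : ℕ) : Continuous (hypLift d m) := by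
  unfold hypLift
  apply (EuclideanSpace.equiv (Fin d) ℝ).symm.continuous.comp
  apply continuous_pi
  intro i
  by_cases h : (i : ℕ) < d - 1
  · simp only [h, dite_true]; fun_prop
  · simp only [h, dite_false]; unfold hypQ; fun_prop

lemma aux_cont_ft {d : ℕ} (μ : Measure (EuclideanSpace ℝ (Fin d))) [IsFiniteMeasure μ] :
    Continuous (ftM μ) := by
  unfold ftM
  apply continuous_of_dominated (bound := fun _ => 1)
  · intro ζ
    apply Continuous.aestronglyMeasurable
    fun_prop
  · intro ζ
    filter_upwards with x
    rw [← mul_neg, ← Complex.ofReal_neg, mul_comm, Complex.norm_exp_ofReal_mul_I]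
  · exact integrable_const _
  · filter_upwards with x
    fun_prop

lemma aux_ft_norm_le {d : ℕ} (μ : Measure (EuclideanSpace ℝ (Fin d))) [IsFiniteMeasure μ]
    (ζ : EuclideanSpace ℝ (Fin d)) : ‖ftM μ ζ‖ ≤ μ.real Set.univ := by
  unfold ftM
  refine (norm_integral_le_of_norm_le_const (C := 1) ?_).trans (by simp)
  filter_upwards with x
  rw [← mul_neg, ← Complex.ofReal_neg, mul_comm, Complex.norm_exp_ofReal_mul_I]

lemma aux_ft_sq {d : ℕ} (μ : Measure (EuclideanSpace ℝ (Fin d))) [IsFiniteMeasure μ]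
    (ζ : EuclideanSpace ℝ (Fin d)) :
    ((‖ftM μ ζ‖ ^ 2 : ℝ) : ℂ) = ∫ p, Complex.exp (-(Complex.I *
      (((∑ i, (p.1 - p.2) i * ζ i) : ℝ) : ℂ))) ∂(μ.prod μ) := by
  have h : ∀ p : EuclideanSpace ℝ (Fin d) × EuclideanSpace ℝ (Fin d),
      Complex.exp (-(Complex.I * (((∑ i, (p.1 - p.2) i * ζ i) : ℝ) : ℂ)))
      = Complex.exp (-(Complex.I * (((∑ i, p.1 i * ζ i) : ℝ) : ℂ))) *
        (starRingEnd ℂ) (Complex.exp (-(Complex.I * (((∑ i, p.2 i * ζ i) : ℝ) : ℂ)))) := by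
    intro p
    rw [← Complex.exp_conj, ← Complex.exp_add]
    congr 1
    simp only [map_neg, map_mul, Complex.conj_I, Complex.conj_ofReal, PiLp.sub_apply, sub_mul,
      Finset.sum_sub_distrib, Complex.ofReal_sub]
    ring
  simp_rw [h]
  rw [integral_prod_mul (fun x : EuclideanSpace ℝ (Fin d) =>
      Complex.exp (-(Complex.I * (((∑ i, x i * ζ i) : ℝ) : ℂ))))
    (fun x : EuclideanSpace ℝ (Fin d) => (starRingEnd ℂ)
      (Complex.exp (-(Complex.I * (((∑ i, x i * ζ i) : ℝ) : ℂ))))), integral_conj]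
  change _ = ftM μ ζ * (starRingEnd ℂ) (ftM μ ζ)
  rw [Complex.mul_conj, Complex.normSq_eq_norm_sq]

/-- the Gaussian kernel -/
def auxK (d m : ℕ) (w : EuclideanSpace ℝ (Fin d)) : ℂ :=
  ∫ ξ : EuclideanSpace ℝ (Fin (d - 1)), ((Real.exp (-‖ξ‖ ^ 2) : ℝ) : ℂ) *
    Complex.exp (-(Complex.I * (((∑ i, w i * hypLift d m ξ i) : ℝ) : ℂ)))

lemma aux_factor (s t e : ℝ) (he : e ^ 2 = 1) :
    ‖((Real.pi : ℂ) / (1 + Complex.I * s * e)) ^ (1 / 2 : ℂ) *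
      Complex.exp ((-(Complex.I * t)) ^ 2 / (4 * (1 + Complex.I * s * e)))‖
    = Real.pi ^ (1/2 : ℝ) * ((1 + s ^ 2) ^ (-(1/4) : ℝ) * Real.exp (-(t ^ 2 / (1 + s^2) / 4))) := by
  have hD : 0 < 1 + s ^ 2 := by positivity
  have hb : ‖(1 + Complex.I * s * e : ℂ)‖ = (1 + s ^ 2) ^ (1/2 : ℝ) := by
    rw [← Real.sqrt_eq_rpow, Complex.norm_eq_sqrt_sq_add_sq]
    congr 1
    simp [mul_pow, he]
  have hre : ((-(Complex.I * t)) ^ 2 / (4 * (1 + Complex.I * s * e)) : ℂ).re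
      = -(t ^ 2 / (1 + s^2) / 4) := by
    have h1 : ((-(Complex.I * t)) ^ 2 / (4 * (1 + Complex.I * s * e)) : ℂ)
      = ((-(t^2/4) : ℝ) : ℂ) * (1 + Complex.I * s * e)⁻¹ := by
      rw [div_eq_mul_inv, mul_inv, neg_sq, mul_pow, Complex.I_sq]
      push_cast
      ring
    have h2 : Complex.normSq (1 + Complex.I * s * e) = 1 + s ^ 2 := by
      rw [Complex.normSq_apply]
      simp
      linear_combination s^2 * he
    rw [h1, Complex.re_ofReal_mul, Complex.inv_re, h2]
    simp
    field_simp
  rw [norm_mul, Complex.norm_exp, hre]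
  have : (1 / 2 : ℂ) = ((1/2 : ℝ) : ℂ) := by norm_num
  rw [this, Complex.norm_cpow_real, norm_div, hb, Complex.norm_real, Real.norm_eq_abs,
    abs_of_pos Real.pi_pos, Real.div_rpow Real.pi_pos.le (by positivity), ← Real.rpow_mul hD.le,
    Real.rpow_neg hD.le]
  norm_num
  ring

lemma aux_K_norm (n m : ℕ) (w : EuclideanSpace ℝ (Fin (n+1))) :
    ‖auxK (n+1) m w‖ = (Real.pi ^ (1/2 : ℝ)) ^ n * (((1 + w (Fin.last n) ^ 2) ^ (-(1/4) : ℝ)) ^ n *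
      Real.exp (-((∑ j : Fin n, w (Fin.castSucc j) ^ 2) / (1 + w (Fin.last n) ^ 2) / 4))) := by
  set s := w (Fin.last n) with hs
  let e : Fin (n+1-1) → ℝ := fun i => if (i : ℕ) < n+1 - 1 - m then (1 : ℝ) else -1
  let b : Fin (n+1-1) → ℂ := fun i => 1 + Complex.I * s * e i
  let c : Fin (n+1-1) → ℂ := fun i => -(Complex.I * (w (Fin.castSucc (n := n) i) : ℝ))
  have hb : ∀ i, 0 < (b i).re := by intro i; simp [b]
  have key : auxK (n+1) m w = ∏ i, ((Real.pi : ℂ) / b i) ^ (1 / 2 : ℂ) *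
      Complex.exp (c i ^ 2 / (4 * b i)) := by
    rw [← GaussianFourier.integral_cexp_neg_sum_mul_add hb c, auxK,
      ← (PiLp.volume_preserving_toLp (Fin (n+1-1))).integral_comp
      (MeasurableEquiv.toLp 2 _).measurableEmbedding]
    congr 1
    ext v
    rw [aux_sum, Complex.ofReal_exp, ← Complex.exp_add]
    congr 1
    rw [EuclideanSpace.norm_sq_eq]
    simp only [hypQ, b, c, e, ← hs, Real.norm_eq_abs, sq_abs, Complex.ofReal_neg,
      Complex.ofReal_sum, Complex.ofReal_add, Complex.ofReal_mul, Complex.ofReal_pow,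
      add_mul, one_mul, Finset.sum_add_distrib, Finset.mul_sum, mul_add, neg_add, 
      neg_mul, Finset.sum_neg_distrib, mul_assoc]
    ring
  rw [key, norm_prod]
  have : ∀ i, ‖((Real.pi : ℂ) / b i) ^ (1 / 2 : ℂ) * Complex.exp (c i ^ 2 / (4 * b i))‖
    = _ := fun i => aux_factor s (w (Fin.castSucc (n := n) i)) (e i)
      (by simp only [e]; split_ifs <;> norm_num)
  simp_rw [this, Finset.prod_mul_distrib, Finset.prod_const, ← Real.exp_sum]
  simp [Finset.sum_div, hs]

lemma aux_real (p D T : ℝ) (n : ℕ) (hp : 0 < p) (hpn : p ≤ (n : ℝ) / 4) (hD : 1 ≤ D) (hT : 0 ≤ T) :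
    (D + T) ^ p * ((D ^ (-(1/4) : ℝ)) ^ n * Real.exp (-(T / D / 4))) ≤ (1 + 4 * p) ^ p := by
  have hD0 : 0 < D := by linarith
  set u := T / D with hu
  have hu0 : 0 ≤ u := by positivity
  have h1 : D + T = D * (1 + u) := by rw [hu]; field_simp
  have h2 : (1 + u) ^ p ≤ (1 + 4 * p) ^ p * Real.exp (u / 4) := by
    have h3 : 1 + u ≤ (1 + 4 * p) * Real.exp (u / (4 * p)) := by
      have := Real.add_one_le_exp (u / (4 * p))
      have h5 : (1 + 4 * p) * (u / (4 * p) + 1) ≤ (1 + 4 * p) * Real.exp (u / (4 * p)) := by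
        gcongr
      have h6 : (1 + 4 * p) * (u / (4 * p) + 1) = u / (4 * p) + 1 + u + 4 * p := by
        field_simp
        ring
      have : 0 ≤ u / (4 * p) := by positivity
      linarith
    calc (1 + u) ^ p ≤ ((1 + 4 * p) * Real.exp (u / (4 * p))) ^ p := by gcongr
      _ = _ := by
        rw [Real.mul_rpow (by positivity) (by positivity), ← Real.exp_mul]
        congr 2
        field_simp
  have h3 : D ^ p * (D ^ (-(1/4) : ℝ)) ^ n ≤ 1 := by
    rw [← Real.rpow_natCast, ← Real.rpow_mul hD0.le, ← Real.rpow_add hD0]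
    apply Real.rpow_le_one_of_one_le_of_nonpos hD
    linarith
  rw [h1, Real.mul_rpow hD0.le (by positivity)]
  calc _ = (D ^ p * (D ^ (-(1/4) : ℝ)) ^ n) * ((1 + u) ^ p * Real.exp (-(u / 4))) := by ring
    _ ≤ 1 * ((1 + 4 * p) ^ p * Real.exp (u / 4) * Real.exp (-(u / 4))) := by
      gcongr
    _ = _ := by rw [mul_assoc, ← Real.exp_add]; simp

lemma aux_K_bound (d m : ℕ) (hd : 3 ≤ d) (α : ℝ) (hα0 : 0 < α) (hα : α < ((d : ℝ) - 1) / 2) :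
    ∃ C : ℝ, 0 < C ∧ ∀ w : EuclideanSpace ℝ (Fin d), ‖w‖ ^ α * ‖auxK d m w‖ ≤ C := by
  obtain ⟨n, rfl⟩ : ∃ n, d = n + 1 := ⟨d - 1, by omega⟩
  refine ⟨(Real.pi ^ (1/2 : ℝ)) ^ n * (1 + 4 * (α / 2)) ^ (α / 2), by positivity, fun w => ?_⟩
  rw [aux_K_norm]
  have h := aux_real (α / 2) (1 + w (Fin.last n) ^ 2) (∑ j : Fin n, w (Fin.castSucc j) ^ 2) n
    (by positivity) (by push_cast at hα; linarith) (by nlinarith [sq_nonneg (w (Fin.last n))])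
    (by positivity)
  have h2 : ‖w‖ ^ α ≤ (1 + w (Fin.last n) ^ 2 + ∑ j : Fin n, w (Fin.castSucc j) ^ 2) ^ (α / 2) := by
    have : ‖w‖ ^ α = (‖w‖ ^ 2) ^ (α / 2) := by
      rw [← Real.rpow_natCast, ← Real.rpow_mul (norm_nonneg _)]
      congr 1; push_cast; ring
    rw [this]
    gcongr
    rw [EuclideanSpace.norm_sq_eq, Fin.sum_univ_castSucc]
    simp only [Real.norm_eq_abs, sq_abs]
    linarith
  calc _ ≤ (1 + w (Fin.last n) ^ 2 + ∑ j : Fin n, w (Fin.castSucc j) ^ 2) ^ (α / 2) * _ := by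
        gcongr
    _ = (Real.pi ^ (1/2 : ℝ)) ^ n * ((1 + w (Fin.last n) ^ 2 + ∑ j : Fin n, w (Fin.castSucc j) ^ 2) ^ (α / 2) * (((1 + w (Fin.last n) ^ 2) ^ (-(1/4) : ℝ)) ^ n *
      Real.exp (-((∑ j : Fin n, w (Fin.castSucc j) ^ 2) / (1 + w (Fin.last n) ^ 2) / 4)))) := by ring
    _ ≤ _ := by gcongr

lemma aux_gauss_int (k : ℕ) :
    Integrable (fun ξ : EuclideanSpace ℝ (Fin k) => Real.exp (-‖ξ‖ ^ 2)) := by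
  have h := (GaussianFourier.integrable_cexp_neg_mul_sq_norm_add (V := EuclideanSpace ℝ (Fin k))
    (b := 1) (by simp) 0 0).norm
  refine h.congr ?_
  filter_upwards with ξ
  rw [Complex.norm_exp]
  congr 1
  simp [← Complex.ofReal_pow]

/-- Gaussian average as a double integral. -/
lemma aux_swap (d m : ℕ) (μ : Measure (EuclideanSpace ℝ (Fin d))) [IsFiniteMeasure μ] (R : ℝ) :
    ((∫ ξ : EuclideanSpace ℝ (Fin (d - 1)), Real.exp (-‖ξ‖ ^ 2) * ‖ftM μ (R • hypLift d m ξ)‖ ^ 2 : ℝ) : ℂ)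
      = ∫ p, auxK d m (R • (p.1 - p.2)) ∂(μ.prod μ) := by
  have hL := aux_cont_lift d m
  rw [← integral_complex_ofReal]
  simp_rw [Complex.ofReal_mul, aux_ft_sq, auxK, ← integral_const_mul]
  rw [integral_integral_swap]
  · congr 1
    ext p
    congr 1
    ext ξ
    congr 5
    apply Finset.sum_congr rfl
    intro i _
    simp only [PiLp.smul_apply, smul_eq_mul]
    ring
  · have hg : Integrable (fun q : EuclideanSpace ℝ (Fin (d - 1)) ×
        (EuclideanSpace ℝ (Fin d) × EuclideanSpace ℝ (Fin d)) => Real.exp (-‖q.1‖ ^ 2) * (1 : ℝ))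
        (volume.prod (μ.prod μ)) :=
      (aux_gauss_int (d-1)).mul_prod (integrable_const (1 : ℝ))
    refine hg.mono' ?_ ?_
    · apply Continuous.aestronglyMeasurable
      simp only [Function.uncurry_def]
      fun_prop
    · filter_upwards with q
      simp only [Function.uncurry_def]
      rw [← mul_neg, ← Complex.ofReal_neg, norm_mul, mul_comm Complex.I, Complex.norm_exp_ofReal_mul_I,
        Complex.norm_real, Real.norm_eq_abs, Real.abs_exp]

lemma aux_avg_le (d m : ℕ) (μ : Measure (EuclideanSpace ℝ (Fin d))) [IsFiniteMeasure μ] (R : ℝ) :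
    hypAvg d m μ R ≤ 3 * Real.exp 1 *
      ∫ ξ : EuclideanSpace ℝ (Fin (d - 1)), Real.exp (-‖ξ‖ ^ 2) * ‖ftM μ (R • hypLift d m ξ)‖ ^ 2 := by
  have hL := aux_cont_lift d m
  have hF := aux_cont_ft μ
  have hint : Integrable (fun ξ : EuclideanSpace ℝ (Fin (d - 1)) =>
      3 * Real.exp 1 * (Real.exp (-‖ξ‖ ^ 2) * ‖ftM μ (R • hypLift d m ξ)‖ ^ 2)) := by
    apply Integrable.const_mul
    refine ((aux_gauss_int (d-1)).mul_const ((μ.real Set.univ) ^ 2)).mono' ?_ ?_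
    · apply Continuous.aestronglyMeasurable
      fun_prop
    · filter_upwards with ξ
      rw [Real.norm_of_nonneg (by positivity)]
      gcongr
      exact aux_ft_norm_le _ _
  rw [← integral_const_mul]
  refine le_trans ?_ (setIntegral_le_integral (s := ball 0 1) hint ?_)
  · unfold hypAvg
    apply integral_mono_of_nonneg
    · filter_upwards with ξ; simp only [Pi.zero_apply]; positivity
    · exact hint.integrableOn
    · filter_upwards [ae_restrict_mem measurableSet_ball] with ξ hξ
      have hξ : ‖ξ‖ < 1 := by simpa using hξ
      have h1 : Real.sqrt (1 + 4 * ‖ξ‖ ^ 2) ≤ 3 := by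
        rw [Real.sqrt_le_left (by norm_num)]
        nlinarith [norm_nonneg ξ]
      have h2 : 1 ≤ Real.exp 1 * Real.exp (-‖ξ‖ ^ 2) := by
        rw [← Real.exp_add]
        apply Real.one_le_exp
        nlinarith [norm_nonneg ξ]
      calc ‖ftM μ (R • hypLift d m ξ)‖ ^ 2 * Real.sqrt (1 + 4 * ‖ξ‖ ^ 2)
          ≤ ‖ftM μ (R • hypLift d m ξ)‖ ^ 2 * (3 * 1) := by gcongr; linarith
        _ ≤ ‖ftM μ (R • hypLift d m ξ)‖ ^ 2 * (3 * (Real.exp 1 * Real.exp (-‖ξ‖ ^ 2))) := by gcongr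
        _ = _ := by ring
  · filter_upwards with ξ; simp only [Pi.zero_apply]; positivity

lemma aux_upper (d m : ℕ) (hd : 3 ≤ d) (α : ℝ) (hα0 : 0 < α) (hα : α < ((d : ℝ) - 1) / 2)
    (β : ℝ) (hβ : β < α) : decayBound d m α β := by
  obtain ⟨C, hC, hK⟩ := aux_K_bound d m hd α hα0 hα
  refine ⟨3 * Real.exp 1 * C, by positivity, ?_⟩
  intro μ hμ _ R hR
  have hR0 : 0 < R := by linarith
  set J := ∫ ξ : EuclideanSpace ℝ (Fin (d - 1)),
    Real.exp (-‖ξ‖ ^ 2) * ‖ftM μ (R • hypLift d m ξ)‖ ^ 2 with hJ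
  have hJ0 : 0 ≤ J := integral_nonneg fun ξ => by positivity
  have hpt : ∀ p : EuclideanSpace ℝ (Fin d) × EuclideanSpace ℝ (Fin d),
      ‖auxK d m (R • (p.1 - p.2))‖ₑ ≤
        ENNReal.ofReal (C * R ^ (-α)) * ENNReal.ofReal (dist p.1 p.2) ^ (-α) := by
    intro p
    rcases eq_or_ne p.1 p.2 with h | h
    · rw [h, dist_self, ENNReal.ofReal_zero, ENNReal.zero_rpow_of_neg (by linarith),
        ENNReal.mul_top]
      · exact le_top
      · have : 0 < C * R ^ (-α) := by positivity
        simpa using this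
    · have hdist : 0 < dist p.1 p.2 := dist_pos.2 h
      rw [ENNReal.ofReal_rpow_of_pos hdist, ← ENNReal.ofReal_mul (by positivity),
        ← ofReal_norm]
      apply ENNReal.ofReal_le_ofReal
      have := hK (R • (p.1 - p.2))
      rw [norm_smul, ← dist_eq_norm, Real.norm_of_nonneg hR0.le,
        Real.mul_rpow hR0.le hdist.le] at this
      rw [Real.rpow_neg hR0.le, Real.rpow_neg hdist.le]
      have h1 : 0 < R ^ α := by positivity
      have h2 : 0 < dist p.1 p.2 ^ α := by positivity
      rw [mul_assoc, ← mul_inv, ← div_eq_mul_inv, le_div_iff₀ (by positivity)]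
      linarith
  have h1 : ENNReal.ofReal J ≤ ENNReal.ofReal (C * R ^ (-α)) * energy α μ := by
    have : ENNReal.ofReal J = ‖∫ p, auxK d m (R • (p.1 - p.2)) ∂(μ.prod μ)‖ₑ := by
      rw [← aux_swap, ← hJ, ← ofReal_norm, Complex.norm_real, Real.norm_of_nonneg hJ0]
    rw [this]
    refine (enorm_integral_le_lintegral_enorm _).trans ?_
    refine (lintegral_mono hpt).trans ?_
    have hm : Measurable fun p : EuclideanSpace ℝ (Fin d) × EuclideanSpace ℝ (Fin d) =>
        ENNReal.ofReal (dist p.1 p.2) ^ (-α) := by fun_prop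
    rw [lintegral_const_mul _ hm, lintegral_prod _ hm.aemeasurable]
    rfl
  calc ENNReal.ofReal (hypAvg d m μ R) ≤ ENNReal.ofReal (3 * Real.exp 1 * J) :=
        ENNReal.ofReal_le_ofReal (aux_avg_le d m μ R)
    _ = ENNReal.ofReal (3 * Real.exp 1) * ENNReal.ofReal J := ENNReal.ofReal_mul (by positivity)
    _ ≤ ENNReal.ofReal (3 * Real.exp 1) * (ENNReal.ofReal (C * R ^ (-α)) * energy α μ) := by gcongr
    _ = ENNReal.ofReal (3 * Real.exp 1 * C * R ^ (-α)) * energy α μ := by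
        rw [← mul_assoc, ← ENNReal.ofReal_mul (by positivity)]
        congr 2; ring
    _ ≤ _ := by
        gcongr
        exact hR.le

/-- the test measure -/
def auxNu (d : ℕ) : Measure (EuclideanSpace ℝ (Fin d)) := volume.restrict (ball 0 (1/2))

instance (d : ℕ) : IsFiniteMeasure (auxNu d) :=
  ⟨by simpa [auxNu] using measure_ball_lt_top⟩

lemma auxNu_pos (d : ℕ) : 0 < (auxNu d) Set.univ := by
  simpa [auxNu] using measure_ball_pos volume (0 : EuclideanSpace ℝ (Fin d)) (by norm_num : (0:ℝ) < 1/2)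

lemma auxNu_ae (d : ℕ) : ∀ᵐ x ∂(auxNu d), ‖x‖ < 1 / 2 := by
  filter_upwards [ae_restrict_mem measurableSet_ball] with x hx
  simpa using hx

lemma auxNu_energy_pos (d : ℕ) (α : ℝ) (hα0 : 0 < α) : 0 < energy α (auxNu d) := by
  have h : ∫⁻ _, ∫⁻ _, 1 ∂(auxNu d) ∂(auxNu d) ≤ energy α (auxNu d) := by
    unfold energy
    apply lintegral_mono_ae
    filter_upwards [auxNu_ae d] with x hx
    apply lintegral_mono_ae
    filter_upwards [auxNu_ae d] with y hy
    rw [ENNReal.rpow_neg, ENNReal.one_le_inv]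
    apply ENNReal.rpow_le_one _ hα0.le
    rw [ENNReal.ofReal_le_one]
    have := dist_le_norm_add_norm x y
    linarith
  refine lt_of_lt_of_le ?_ h
  simp only [lintegral_const, one_mul]
  exact ENNReal.mul_pos (auxNu_pos d).ne' (auxNu_pos d).ne'

lemma auxNu_energy_fin (d : ℕ) (hd : 3 ≤ d) (α : ℝ) (hα0 : 0 < α) (hα : α < d) :
    energy α (auxNu d) ≠ ⊤ := by
  have hi : IntegrableOn (fun x : EuclideanSpace ℝ (Fin d) => ‖x‖ ^ (-α)) (ball 0 1) volume := by
    refine integrableOn_ball_of_norm_le_rpow (C := 1) (α := α) ?_ ?_ ?_ ?_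
    · simp; omega
    · simpa using hα
    · filter_upwards with x
      rw [Real.norm_of_nonneg (by positivity), one_mul]
    · apply Measurable.aestronglyMeasurable
      fun_prop
  set A := ∫⁻ x in ball (0 : EuclideanSpace ℝ (Fin d)) 1, ENNReal.ofReal (‖x‖) ^ (-α) with hA
  have hAfin : A < ⊤ := by
    have h := hi.lintegral_lt_top
    refine lt_of_eq_of_lt ?_ h
    rw [hA]
    have : Nontrivial (EuclideanSpace ℝ (Fin d)) := by
      apply Module.nontrivial_of_finrank_pos (R := ℝ)
      simp; omega
    apply lintegral_congr_ae
    have h0 : ∀ᵐ x : EuclideanSpace ℝ (Fin d), x ≠ 0 := by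
      simp [ae_iff]
    filter_upwards [ae_restrict_of_ae h0] with x hx
    rw [ENNReal.ofReal_rpow_of_pos (norm_pos_iff.2 hx)]
  have hb : ∀ᵐ x ∂(auxNu d), ∫⁻ y, ENNReal.ofReal (dist x y) ^ (-α) ∂(auxNu d) ≤ A := by
    filter_upwards [auxNu_ae d] with x hx
    rw [hA, auxNu, ← lintegral_indicator measurableSet_ball, ← lintegral_indicator measurableSet_ball,
      ← lintegral_sub_left_eq_self _ x]
    apply lintegral_mono
    intro y
    change (ball (0 : EuclideanSpace ℝ (Fin d)) (1 / 2)).indicator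
      (fun y => ENNReal.ofReal (dist x y) ^ (-α)) (x - y) ≤ _
    classical
    rw [Set.indicator_apply, Set.indicator_apply]
    split_ifs with h1 h2
    · rw [dist_eq_norm, sub_sub_cancel]
    · exfalso
      apply h2
      simp only [mem_ball_zero_iff] at h1 ⊢
      have := norm_sub_le x (x - y)
      rw [sub_sub_cancel] at this
      linarith
    · positivity
    · rfl
  have : energy α (auxNu d) ≤ A * (auxNu d) Set.univ := by
    unfold energy
    exact (lintegral_mono_ae hb).trans (by simp)
  exact (this.trans_lt (ENNReal.mul_lt_top hAfin (measure_lt_top _ _))).ne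

lemma aux_lift_norm (d m : ℕ) (hd : 3 ≤ d) (ξ : EuclideanSpace ℝ (Fin (d - 1))) (hξ : ‖ξ‖ < 1) :
    ‖hypLift d m ξ‖ ≤ 2 := by
  obtain ⟨n, rfl⟩ : ∃ n, d = n + 1 := ⟨d - 1, by omega⟩
  have hn := EuclideanSpace.norm_sq_eq ξ
  have hQ : |hypQ (n+1) m ξ| ≤ ‖ξ‖ ^ 2 := by
    rw [hn, hypQ]
    refine (Finset.abs_sum_le_sum_abs _ _).trans (Finset.sum_le_sum fun i _ => ?_)
    split_ifs <;> simp
  have h1 : ‖hypLift (n+1) m ξ‖ ^ 2 = ‖ξ‖ ^ 2 + hypQ (n+1) m ξ ^ 2 := by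
    rw [EuclideanSpace.norm_sq_eq, Fin.sum_univ_castSucc, hn]
    simp [hypLift]
  have h2 : ‖ξ‖ ^ 2 ≤ 1 := by nlinarith [norm_nonneg ξ]
  have h3 : hypQ (n+1) m ξ ^ 2 ≤ 1 := by
    rw [← sq_abs]; nlinarith [abs_nonneg (hypQ (n+1) m ξ)]
  nlinarith [norm_nonneg (hypLift (n+1) m ξ)]

lemma aux_ft_lower (d : ℕ) (ζ : EuclideanSpace ℝ (Fin d)) (hζ : ‖ζ‖ ≤ 2) :
    (auxNu d).real Set.univ * (1/2) ≤ ‖ftM (auxNu d) ζ‖ := by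
  refine le_trans ?_ (Complex.re_le_norm _)
  have hi : Integrable (fun x : EuclideanSpace ℝ (Fin d) =>
      Complex.exp (-(Complex.I * (((∑ i, x i * ζ i) : ℝ) : ℂ)))) (auxNu d) := by
    refine (integrable_const (1 : ℝ)).mono' ?_ ?_
    · apply Continuous.aestronglyMeasurable
      fun_prop
    · filter_upwards with x
      rw [← mul_neg, ← Complex.ofReal_neg, mul_comm, Complex.norm_exp_ofReal_mul_I]
  have : (ftM (auxNu d) ζ).re = ∫ x, (Complex.exp (-(Complex.I * (((∑ i, x i * ζ i) : ℝ) : ℂ)))).re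
      ∂(auxNu d) := (integral_re hi).symm
  rw [this]
  have hc : (auxNu d).real Set.univ * (1/2) = ∫ _, (1/2 : ℝ) ∂(auxNu d) := by simp
  rw [hc]
  apply integral_mono_ae (integrable_const _) hi.re
  filter_upwards [auxNu_ae d] with x hx
  have h1 : (Complex.exp (-(Complex.I * (((∑ i, x i * ζ i) : ℝ) : ℂ)))).re
      = Real.cos (∑ i, x i * ζ i) := by
    rw [← mul_neg, ← Complex.ofReal_neg, mul_comm, Complex.exp_ofReal_mul_I_re, Real.cos_neg]
  have h2 : |∑ i, x i * ζ i| ≤ 1 := by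
    have h := abs_real_inner_le_norm ζ x
    rw [PiLp.inner_apply] at h
    simp only [RCLike.inner_apply, conj_trivial] at h
    nlinarith [norm_nonneg x, norm_nonneg ζ]
  change _ ≤ (Complex.exp (-(Complex.I * (((∑ i, x i * ζ i) : ℝ) : ℂ)))).re
  rw [h1]
  have := Real.one_sub_sq_div_two_le_cos (x := ∑ i, x i * ζ i)
  have h3 : (∑ i, x i * ζ i) ^ 2 ≤ 1 := by rw [← sq_abs]; nlinarith [abs_nonneg (∑ i, x i * ζ i)]
  linarith

lemma aux_avg_pos (d m : ℕ) (hd : 3 ≤ d) : 0 < hypAvg d m (auxNu d) 1 := by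
  have hL := aux_cont_lift d m
  have hF := aux_cont_ft (auxNu d)
  have hν : 0 < (auxNu d).real Set.univ :=
    ENNReal.toReal_pos (auxNu_pos d).ne' (measure_lt_top _ _).ne
  set c := ((auxNu d).real Set.univ * (1/2)) ^ 2 with hc
  have hc0 : 0 < c := by positivity
  have hvol : 0 < (volume : Measure (EuclideanSpace ℝ (Fin (d-1)))).real (ball 0 1) :=
    ENNReal.toReal_pos (measure_ball_pos volume _ one_pos).ne' measure_ball_lt_top.ne
  have hle : ∫ _ in ball (0 : EuclideanSpace ℝ (Fin (d - 1))) 1, c ≤ hypAvg d m (auxNu d) 1 := by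
    unfold hypAvg
    apply integral_mono_ae
    · exact integrableOn_const measure_ball_lt_top.ne
    · have : Continuous fun ξ : EuclideanSpace ℝ (Fin (d - 1)) =>
        ‖ftM (auxNu d) ((1:ℝ) • hypLift d m ξ)‖ ^ 2 * Real.sqrt (1 + 4 * ‖ξ‖ ^ 2) := by fun_prop
      exact (this.continuousOn.integrableOn_compact (isCompact_closedBall 0 1)).mono_set
        ball_subset_closedBall
    · filter_upwards [ae_restrict_mem measurableSet_ball] with ξ hξ
      have hξ : ‖ξ‖ < 1 := by simpa using hξ
      have h1 : 1 ≤ Real.sqrt (1 + 4 * ‖ξ‖ ^ 2) := by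
        rw [Real.one_le_sqrt]; nlinarith [norm_nonneg ξ]
      have h2 := aux_ft_lower d (hypLift d m ξ) (aux_lift_norm d m hd ξ hξ)
      rw [one_smul]
      calc c = c * 1 := (mul_one _).symm
        _ ≤ _ := by rw [hc]; gcongr
  refine lt_of_lt_of_le ?_ hle
  simp
  positivity

lemma aux_lower (d m : ℕ) (hd : 3 ≤ d) (α : ℝ) (hα0 : 0 < α) (hα : α < d)
    (β : ℝ) (hβ : α < β) : decayFails d m α β := by
  intro C hC
  have hA := aux_avg_pos d m hd
  set A := hypAvg d m (auxNu d) 1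
  have hE := auxNu_energy_fin d hd α hα0 hα
  have hE0 := auxNu_energy_pos d α hα0
  set E := energy α (auxNu d) with hEdef
  have hlim : Filter.Tendsto (fun R : ℝ => C * E.toReal * R ^ (-(β - α))) Filter.atTop (nhds 0) := by
    simpa using (tendsto_rpow_neg_atTop (sub_pos.2 hβ)).const_mul (C * E.toReal)
  obtain ⟨R, hR1, hR2⟩ := ((hlim.eventually_lt_const hA).and
    (Filter.eventually_gt_atTop 1)).exists
  have hR0 : 0 < R := by linarith
  have hmeas : Measurable fun x : EuclideanSpace ℝ (Fin d) => R⁻¹ • x := by fun_prop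
  have hemb : MeasurableEmbedding fun x : EuclideanSpace ℝ (Fin d) => R⁻¹ • x :=
    (Homeomorph.smulOfNeZero (R⁻¹) (inv_ne_zero hR0.ne')).measurableEmbedding
  have hen : energy α ((auxNu d).map fun x => R⁻¹ • x) = ENNReal.ofReal (R ^ α) * E := by
    rw [hEdef]
    unfold energy
    rw [hemb.lintegral_map]
    simp_rw [hemb.lintegral_map]
    rw [← lintegral_const_mul' _ _ ENNReal.ofReal_ne_top]
    congr 1; ext x
    rw [← lintegral_const_mul' _ _ ENNReal.ofReal_ne_top]
    congr 1; ext y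
    rw [dist_smul₀, Real.norm_of_nonneg (by positivity), ENNReal.ofReal_mul (by positivity),
      ENNReal.mul_rpow_of_ne_top ENNReal.ofReal_ne_top ENNReal.ofReal_ne_top,
      ENNReal.ofReal_rpow_of_pos (by positivity)]
    congr 2
    rw [Real.inv_rpow hR0.le, Real.rpow_neg hR0.le, inv_inv]
  have hft : ∀ ζ, ftM ((auxNu d).map fun x => R⁻¹ • x) (R • ζ) = ftM (auxNu d) ((1:ℝ) • ζ) := by
    intro ζ
    unfold ftM
    rw [hemb.integral_map]
    congr 1; ext x
    congr 5
    ext i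
    simp only [PiLp.smul_apply, smul_eq_mul]
    field_simp
  refine ⟨(auxNu d).map fun x => R⁻¹ • x, inferInstance, ?_, ?_, ?_, R, hR2, ?_⟩
  · rw [Measure.map_apply hmeas isClosed_closedBall.measurableSet.compl, Set.preimage_compl,
      ← mem_ae_iff]
    filter_upwards [auxNu_ae d] with x hx
    rw [Set.mem_preimage, mem_closedBall_zero_iff, norm_smul, Real.norm_of_nonneg (by positivity)]
    have : R⁻¹ ≤ 1 := inv_le_one_of_one_le₀ hR2.le
    nlinarith [norm_nonneg x, inv_pos.2 hR0]
  · rw [hen]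
    refine ENNReal.mul_pos ?_ hE0.ne'
    have : 0 < R ^ α := by positivity
    simpa using this
  · rw [hen]
    exact ENNReal.mul_ne_top ENNReal.ofReal_ne_top hE
  · have : hypAvg d m ((auxNu d).map fun x => R⁻¹ • x) R = A := by
      simp only [A, hypAvg, hft]
    rw [this, hen, ENNReal.toReal_mul, ENNReal.toReal_ofReal (by positivity)]
    refine lt_of_eq_of_lt ?_ hR1
    rw [show -(β - α) = -β + α by ring, Real.rpow_add hR0]
    ring

/-- if `0 < a < (d-1)/2` then `beta(a, H_m^{d-1}) = a`: the decay estimate holds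
for every `0 < b < a` and fails for every `b > a`. -/
theorem statement4 (d m : ℕ) (hd : 3 ≤ d) (hm1 : 1 ≤ m) (hm2 : 2 * m ≤ d - 1)
    (α : ℝ) (hα0 : 0 < α) (hα : α < ((d : ℝ) - 1) / 2) :
    (∀ β : ℝ, 0 < β → β < α → decayBound d m α β) ∧
    (∀ β : ℝ, α < β → decayFails d m α β) := by
  refine ⟨fun β _ hβ => aux_upper d m hd α hα0 hα β hβ, fun β hβ => aux_lower d m hd α hα0 ?_ β hβ⟩
  have : (3 : ℝ) ≤ d := by exact_mod_cast hd
  linarith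
end
end

section
/- Suppose (d−1)/2 ≤ α ≤ (d+1)/2 (and α < d). Then for every β with 0 < β < (d−1)/2 there exists a constant C_β such that for every μ ∈ M_d and every R > 1, ∫_{B^{d−1}(0,1)} |μ̂(R(ξ, ⟨Mξ,ξ⟩))|² √(1+4|ξ|²) dξ ≤ C_β · R^{−β} · I_α(μ). (Equivalently, β(α, H_m^{d−1}) ≥ (d−1)/2 on this range.) -/
open MeasureTheory Metric
open scoped ENNReal NNReal

noncomputable section

lemma s5_exp_bound (n : ℕ) (hn : 1 ≤ n) (s : ℝ) (hs : 0 ≤ s) :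
    Real.exp (-(s / 4)) ≤ (n : ℝ) ^ ((n : ℝ) / 4) * (1 + s) ^ (-((n : ℝ) / 4)) := by
  have hn' : (1 : ℝ) ≤ n := by exact_mod_cast hn
  have h0 : (0 : ℝ) < n := by linarith
  have h1 : 1 + s ≤ n * Real.exp (s / n) := by
    have := Real.add_one_le_exp (s / n)
    have h2 : n * (s / n + 1) ≤ n * Real.exp (s / n) := by gcongr
    have h3 : n * (s / n + 1) = s + n := by field_simp
    linarith
  have h2 : (1 + s) ^ ((n : ℝ) / 4) ≤ (n : ℝ) ^ ((n : ℝ) / 4) * Real.exp (s / 4) := by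
    calc (1 + s) ^ ((n : ℝ) / 4) ≤ (n * Real.exp (s / n)) ^ ((n : ℝ) / 4) := by
          apply Real.rpow_le_rpow <;> [linarith; exact h1; positivity]
      _ = _ := by
          rw [Real.mul_rpow h0.le (Real.exp_pos _).le, ← Real.exp_mul]
          congr 2
          field_simp
  rw [Real.rpow_neg (by linarith), Real.exp_neg, ← div_eq_mul_inv, inv_eq_one_div,
    div_le_div_iff₀ (Real.exp_pos _) (by positivity)]
  linarith

lemma s5_kernel (n : ℕ) (hn : 1 ≤ n) (ε : Fin n → ℝ) (hε : ∀ i, ε i ^ 2 = 1)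
    (z : Fin n → ℝ) (t R : ℝ) (hR : 0 < R) (hρ : 0 < ∑ i, z i ^ 2 + t ^ 2) :
    ‖∫ ξ : EuclideanSpace ℝ (Fin n), ((Real.exp (-‖ξ‖ ^ 2) : ℝ) : ℂ) *
      Complex.exp (-(Complex.I * ((R * (∑ i, z i * ξ i + t * ∑ i, ε i * ξ i ^ 2) : ℝ) : ℂ)))‖
    ≤ Real.pi ^ ((n : ℝ) / 2) * (n : ℝ) ^ ((n : ℝ) / 4) *
      (R ^ 2 * (∑ i, z i ^ 2 + t ^ 2)) ^ (-((n : ℝ) / 4)) := by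
  set b : Fin n → ℂ := fun i => 1 + Complex.I * ((R * t * ε i : ℝ) : ℂ) with hb
  set c : Fin n → ℂ := fun i => -Complex.I * ((R * z i : ℝ) : ℂ) with hc
  set A : ℝ := 1 + R ^ 2 * t ^ 2 with hA
  have hA0 : 0 < A := by positivity
  have hbre : ∀ i, (b i).re = 1 := by intro i; simp [hb]
  have hbim : ∀ i, (b i).im = R * t * ε i := by intro i; simp [hb]
  have hbsq : ∀ i, Complex.normSq (b i) = A := by
    intro i
    rw [Complex.normSq_apply, hbre, hbim]
    linear_combination (R ^ 2 * t ^ 2) * hε i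
  have hbn : ∀ i, ‖b i‖ = Real.sqrt A := by
    intro i
    rw [Complex.norm_def, hbsq]
  have key := GaussianFourier.integral_cexp_neg_sum_mul_add (ι := Fin n) (b := b)
    (by intro i; rw [hbre]; norm_num) c
  have e1 : ∫ ξ : EuclideanSpace ℝ (Fin n), ((Real.exp (-‖ξ‖ ^ 2) : ℝ) : ℂ) *
      Complex.exp (-(Complex.I * ((R * (∑ i, z i * ξ i + t * ∑ i, ε i * ξ i ^ 2) : ℝ) : ℂ)))
      = ∫ v : Fin n → ℝ, Complex.exp (-∑ i, b i * (v i : ℂ) ^ 2 + ∑ i, c i * v i) := by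
    rw [← (EuclideanSpace.volume_preserving_symm_measurableEquiv_toLp (Fin n)).symm.integral_comp'
      ]
    congr 1
    ext ξ
    rw [Complex.ofReal_exp, ← Complex.exp_add]
    congr 1
    rw [EuclideanSpace.norm_sq_eq]
    simp only [Real.norm_eq_abs, sq_abs, hb, hc]
    push_cast
    simp only [mul_add, Finset.mul_sum, add_mul, Finset.sum_add_distrib, neg_add,
      ← Finset.sum_neg_distrib, ← Finset.sum_add_distrib]
    apply Finset.sum_congr rfl
    intro i _
    simp
    ring
  rw [e1, key, norm_prod]
  have e2 : ∀ i, ‖((Real.pi : ℂ) / b i) ^ (1 / 2 : ℂ) * Complex.exp (c i ^ 2 / (4 * b i))‖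
      = (Real.pi / Real.sqrt A) ^ (1 / 2 : ℝ) * Real.exp (-(R ^ 2 * z i ^ 2 / A / 4)) := by
    intro i
    rw [norm_mul, Complex.norm_exp]
    congr 1
    · have : (1 / 2 : ℂ) = ((1 / 2 : ℝ) : ℂ) := by push_cast; rfl
      rw [this, Complex.norm_cpow_real, norm_div, hbn, Complex.norm_real,
        Real.norm_of_nonneg Real.pi_pos.le]
    · congr 1
      have : c i ^ 2 / (4 * b i) = ((-(R ^ 2 * z i ^ 2 / 4) : ℝ) : ℂ) * (b i)⁻¹ := by
        simp only [hc, mul_pow, neg_sq, Complex.I_sq]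
        push_cast
        rw [div_eq_mul_inv, mul_inv]
        ring
      rw [this, Complex.re_ofReal_mul, Complex.inv_re, hbre, hbsq]
      ring
  simp_rw [e2]
  rw [Finset.prod_mul_distrib, Finset.prod_const, ← Real.exp_sum, Finset.card_univ,
    Fintype.card_fin]
  set s : ℝ := R ^ 2 * (∑ i, z i ^ 2) / A with hs
  have hz : 0 ≤ ∑ i, z i ^ 2 := Finset.sum_nonneg fun i _ => sq_nonneg _
  have hs0 : 0 ≤ s := by positivity
  have e3 : ∑ i, -(R ^ 2 * z i ^ 2 / A / 4) = -(s / 4) := by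
    rw [hs, Finset.sum_neg_distrib, Finset.mul_sum, Finset.sum_div, Finset.sum_div]
  have e4 : ((Real.pi / Real.sqrt A) ^ (1 / 2 : ℝ)) ^ n
      = Real.pi ^ ((n : ℝ) / 2) * A ^ (-((n : ℝ) / 4)) := by
    rw [← Real.rpow_natCast, ← Real.rpow_mul (by positivity),
      Real.div_rpow Real.pi_pos.le (Real.sqrt_nonneg _), Real.sqrt_eq_rpow,
      ← Real.rpow_mul hA0.le, div_eq_mul_inv, ← Real.rpow_neg hA0.le]
    congr 2 <;> ring
  rw [e3, e4]
  calc _ ≤ Real.pi ^ ((n : ℝ) / 2) * A ^ (-((n : ℝ) / 4)) *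
        ((n : ℝ) ^ ((n : ℝ) / 4) * (1 + s) ^ (-((n : ℝ) / 4))) := by
        gcongr
        exact s5_exp_bound n hn s hs0
    _ = Real.pi ^ ((n : ℝ) / 2) * (n : ℝ) ^ ((n : ℝ) / 4) * (A * (1 + s)) ^ (-((n : ℝ) / 4)) := by
        rw [Real.mul_rpow hA0.le (by linarith)]
        ring
    _ ≤ _ := by
        have : R ^ 2 * (∑ i, z i ^ 2 + t ^ 2) ≤ A * (1 + s) := by
          have : A * (1 + s) = A + R ^ 2 * ∑ i, z i ^ 2 := by rw [hs]; field_simp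
          rw [this, hA]; nlinarith
        apply mul_le_mul_of_nonneg_left _ (by positivity)
        apply Real.rpow_le_rpow_of_nonpos (by positivity) this
        have : (0 : ℝ) ≤ n := by positivity
        linarith

lemma s5_phase (n m : ℕ) (x : EuclideanSpace ℝ (Fin (n + 1))) (R : ℝ)
    (ξ : EuclideanSpace ℝ (Fin n)) :
    ∑ i, x i * (R • hypLift (n + 1) m ξ) i =
      R * (∑ i : Fin n, x i.castSucc * ξ i + x (Fin.last n) *
        ∑ i : Fin n, (if (i : ℕ) < n - m then (1 : ℝ) else -1) * ξ i ^ 2) := by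
  rw [Fin.sum_univ_castSucc, mul_add, Finset.mul_sum]
  congr 1
  · apply Finset.sum_congr rfl
    intro i _
    simp [hypLift]
    ring
  · simp [hypLift, hypQ]
    ring

lemma s5_meas (n m : ℕ) (R : ℝ) : Continuous
    (fun q : EuclideanSpace ℝ (Fin (n + 1)) × EuclideanSpace ℝ (Fin n) =>
      Complex.exp (-(Complex.I *
        (((∑ i, q.1 i * (R • hypLift (n + 1) m q.2) i) : ℝ) : ℂ)))) := by
  have : (fun q : EuclideanSpace ℝ (Fin (n + 1)) × EuclideanSpace ℝ (Fin n) =>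
      Complex.exp (-(Complex.I *
        (((∑ i, q.1 i * (R • hypLift (n + 1) m q.2) i) : ℝ) : ℂ)))) = fun q =>
      Complex.exp (-(Complex.I * ((R * (∑ i : Fin n, q.1 i.castSucc * q.2 i + q.1 (Fin.last n) *
        ∑ i : Fin n, (if (i : ℕ) < n - m then (1 : ℝ) else -1) * q.2 i ^ 2) : ℝ) : ℂ))) := by
    funext q
    rw [s5_phase]
  rw [this]
  fun_prop

lemma s5_norm (r : ℝ) : ‖Complex.exp (-(Complex.I * (r : ℂ)))‖ = 1 := by
  rw [Complex.norm_exp]; simp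

lemma s5_gauss (n : ℕ) :
    Integrable (fun ξ : EuclideanSpace ℝ (Fin n) => Real.exp (-‖ξ‖ ^ 2)) := by
  have := (GaussianFourier.integrable_cexp_neg_mul_sq_norm_add (V := EuclideanSpace ℝ (Fin n))
    (b := 1) (by simp) 0 0).norm
  refine this.congr (Filter.Eventually.of_forall fun ξ => ?_)
  simp [Complex.norm_exp, ← Complex.ofReal_pow]

lemma s5_sq (n : ℕ) (μ : Measure (EuclideanSpace ℝ (Fin n))) [IsFiniteMeasure μ]
    (ζ : EuclideanSpace ℝ (Fin n)) :
    ((‖ftM μ ζ‖ ^ 2 : ℝ) : ℂ) = ∫ p : EuclideanSpace ℝ (Fin n) × EuclideanSpace ℝ (Fin n),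
      Complex.exp (-(Complex.I * (((∑ i, (p.1 - p.2) i * ζ i) : ℝ) : ℂ))) ∂(μ.prod μ) := by
  rw [Complex.ofReal_pow, ← Complex.mul_conj', ftM, ← integral_conj, ← integral_prod_mul]
  congr 1
  ext p
  rw [← Complex.exp_conj, ← Complex.exp_add]
  congr 1
  simp [sub_mul, Finset.sum_sub_distrib]
  ring

lemma s5_avg (n m : ℕ) (μ : Measure (EuclideanSpace ℝ (Fin (n + 1)))) [IsFiniteMeasure μ]
    (R : ℝ) :
    hypAvg (n + 1) m μ R ≤ (Real.sqrt 5 * Real.exp 1) *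
      ∫ ξ : EuclideanSpace ℝ (Fin n), ‖ftM μ (R • hypLift (n + 1) m ξ)‖ ^ 2 *
        Real.exp (-‖ξ‖ ^ 2) := by
  have hcont : Continuous fun ξ : EuclideanSpace ℝ (Fin n) =>
      ftM μ (R • hypLift (n + 1) m ξ) := by
    unfold ftM
    refine continuous_of_dominated (bound := fun _ => 1) ?_ ?_ ?_ ?_
    · intro ξ
      exact ((s5_meas n m R).comp (Continuous.prodMk_left ξ)).aestronglyMeasurable
    · intro ξ
      exact Filter.Eventually.of_forall fun x => (s5_norm _).le
    · exact integrable_const _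
    · exact Filter.Eventually.of_forall fun x => (s5_meas n m R).comp (Continuous.prodMk_right x)
  have hbd : ∀ ζ, ‖ftM μ ζ‖ ≤ μ.real Set.univ := by
    intro ζ
    have := norm_integral_le_of_norm_le_const (μ := μ) (C := 1)
      (f := fun x => Complex.exp (-(Complex.I * (((∑ i, x i * ζ i) : ℝ) : ℂ))))
      (Filter.Eventually.of_forall fun x => (s5_norm _).le)
    simpa [ftM] using this
  have hint : Integrable fun ξ : EuclideanSpace ℝ (Fin n) =>
      ‖ftM μ (R • hypLift (n + 1) m ξ)‖ ^ 2 * Real.exp (-‖ξ‖ ^ 2) := by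
    refine (s5_gauss n).bdd_mul (c := μ.real Set.univ ^ 2)
      (hcont.norm.pow 2).aestronglyMeasurable ?_
    refine Filter.Eventually.of_forall fun ξ => ?_
    rw [norm_pow, norm_norm]
    gcongr
    exact hbd _
  rw [← integral_const_mul]
  unfold hypAvg
  refine le_trans ?_ (setIntegral_le_integral (s := ball 0 1) (hint.const_mul _)
    (Filter.Eventually.of_forall fun ξ => by simp only [Pi.zero_apply]; positivity))
  refine integral_mono_of_nonneg (Filter.Eventually.of_forall fun ξ => by
    simp only [Pi.zero_apply]; positivity) (hint.const_mul _).integrableOn ?_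
  filter_upwards [ae_restrict_mem measurableSet_ball] with ξ hξ
  have h1 : ‖ξ‖ < 1 := by simpa using hξ
  have h2 : ‖ξ‖ ^ 2 ≤ 1 := by nlinarith [norm_nonneg ξ]
  have h3 : Real.sqrt (1 + 4 * ‖ξ‖ ^ 2) ≤ Real.sqrt 5 := Real.sqrt_le_sqrt (by linarith)
  have h4 : 1 ≤ Real.exp 1 * Real.exp (-‖ξ‖ ^ 2) := by
    rw [← Real.exp_add]; exact Real.one_le_exp (by linarith)
  calc ‖ftM μ (R • hypLift (n + 1) m ξ)‖ ^ 2 * Real.sqrt (1 + 4 * ‖ξ‖ ^ 2)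
      ≤ ‖ftM μ (R • hypLift (n + 1) m ξ)‖ ^ 2 *
        (Real.sqrt 5 * (Real.exp 1 * Real.exp (-‖ξ‖ ^ 2))) := by
        gcongr
        calc _ ≤ Real.sqrt 5 := h3
          _ ≤ _ := le_mul_of_one_le_right (by positivity) h4
    _ = _ := by ring

lemma s5_fubini (n m : ℕ) (μ : Measure (EuclideanSpace ℝ (Fin (n + 1)))) [IsFiniteMeasure μ]
    (R : ℝ) :
    ENNReal.ofReal (∫ ξ : EuclideanSpace ℝ (Fin n), ‖ftM μ (R • hypLift (n + 1) m ξ)‖ ^ 2 *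
        Real.exp (-‖ξ‖ ^ 2)) ≤
    ∫⁻ p : EuclideanSpace ℝ (Fin (n + 1)) × EuclideanSpace ℝ (Fin (n + 1)),
      ‖∫ ξ : EuclideanSpace ℝ (Fin n), ((Real.exp (-‖ξ‖ ^ 2) : ℝ) : ℂ) *
      Complex.exp (-(Complex.I * (((∑ i, (p.1 - p.2) i * (R • hypLift (n + 1) m ξ) i) : ℝ) : ℂ)))‖ₑ
      ∂(μ.prod μ) := by
  have h0 : 0 ≤ ∫ ξ : EuclideanSpace ℝ (Fin n), ‖ftM μ (R • hypLift (n + 1) m ξ)‖ ^ 2 *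
        Real.exp (-‖ξ‖ ^ 2) := integral_nonneg fun ξ => by positivity
  rw [← Real.enorm_of_nonneg h0]
  refine le_trans (le_of_eq ?_) (enorm_integral_le_lintegral_enorm _)
  rw [integral_integral_swap]
  · rw [← ofReal_norm, ← Complex.norm_real, ofReal_norm, ← integral_complex_ofReal]
    congr 2
    ext ξ
    rw [integral_const_mul, Complex.ofReal_mul, s5_sq, mul_comm]
  · have hg : Integrable (fun q : (EuclideanSpace ℝ (Fin (n + 1)) × EuclideanSpace ℝ (Fin (n + 1)))
        × EuclideanSpace ℝ (Fin n) => (1 : ℝ) * Real.exp (-‖q.2‖ ^ 2)) ((μ.prod μ).prod volume) :=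
      (integrable_const (1 : ℝ)).mul_prod (s5_gauss n)
    refine hg.mono' ?_ (Filter.Eventually.of_forall fun q => ?_)
    · apply Continuous.aestronglyMeasurable
      refine Continuous.mul (by fun_prop) ?_
      exact (s5_meas n m R).comp
        (f := fun q : (EuclideanSpace ℝ (Fin (n + 1)) × EuclideanSpace ℝ (Fin (n + 1)))
          × EuclideanSpace ℝ (Fin n) => (q.1.1 - q.1.2, q.2)) (by fun_prop)
    · simp only [Function.uncurry]
      rw [norm_mul, s5_norm, Complex.norm_real, Real.norm_of_nonneg (Real.exp_pos _).le]
      simp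

lemma s5_pt (n m : ℕ) (hn : 1 ≤ n) (α : ℝ) (hα : (n : ℝ) / 2 ≤ α) (R : ℝ) (hR : 0 < R)
    (x y : EuclideanSpace ℝ (Fin (n + 1))) (hxy : dist x y ≤ 2) :
    ‖∫ ξ : EuclideanSpace ℝ (Fin n), ((Real.exp (-‖ξ‖ ^ 2) : ℝ) : ℂ) *
      Complex.exp (-(Complex.I * (((∑ i, (x - y) i * (R • hypLift (n + 1) m ξ) i) : ℝ) : ℂ)))‖ₑ
    ≤ ENNReal.ofReal (Real.pi ^ ((n : ℝ) / 2) * (n : ℝ) ^ ((n : ℝ) / 4) * 2 ^ (α - (n : ℝ) / 2) *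
        R ^ (-((n : ℝ) / 2))) * ENNReal.ofReal (dist x y) ^ (-α) := by
  have hn' : (1 : ℝ) ≤ n := by exact_mod_cast hn
  have hα0 : 0 < α := by linarith
  have hn0 : (0 : ℝ) < n := by linarith
  rcases eq_or_ne x y with rfl | hne
  · rw [dist_self, ENNReal.ofReal_zero, ENNReal.zero_rpow_of_neg (by linarith), ENNReal.mul_top]
    · exact le_top
    · rw [Ne, ENNReal.ofReal_eq_zero, not_le]
      positivity
  · have hD : 0 < dist x y := dist_pos.mpr hne
    have hsq : ∑ i : Fin n, ((x - y) i.castSucc) ^ 2 + ((x - y) (Fin.last n)) ^ 2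
        = dist x y ^ 2 := by
      rw [dist_eq_norm, EuclideanSpace.norm_sq_eq, Fin.sum_univ_castSucc]
      simp
    have hk := s5_kernel n hn (fun i => if (i : ℕ) < n - m then (1 : ℝ) else -1)
      (by intro i; split_ifs <;> norm_num) (fun i => (x - y) i.castSucc)
      ((x - y) (Fin.last n)) R hR (by rw [hsq]; positivity)
    rw [hsq] at hk
    simp_rw [s5_phase]
    rw [ENNReal.ofReal_rpow_of_pos hD, ← ENNReal.ofReal_mul (by positivity),
      ← ofReal_norm]
    apply ENNReal.ofReal_le_ofReal
    refine hk.trans ?_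
    have e : (R ^ 2 * dist x y ^ 2) ^ (-((n : ℝ) / 4))
        = R ^ (-((n : ℝ) / 2)) * dist x y ^ (-((n : ℝ) / 2)) := by
      rw [← mul_pow, ← Real.rpow_natCast, ← Real.rpow_mul (by positivity),
        Real.mul_rpow hR.le hD.le]
      congr 2 <;> (push_cast; ring)
    have e2 : dist x y ^ (-((n : ℝ) / 2)) ≤ 2 ^ (α - (n : ℝ) / 2) * dist x y ^ (-α) := by
      have : -((n : ℝ) / 2) = (α - (n : ℝ) / 2) + (-α) := by ring
      rw [this, Real.rpow_add hD]
      gcongr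
    rw [e]
    calc _ ≤ Real.pi ^ ((n : ℝ) / 2) * (n : ℝ) ^ ((n : ℝ) / 4) * (R ^ (-((n : ℝ) / 2)) *
          (2 ^ (α - (n : ℝ) / 2) * dist x y ^ (-α))) := by gcongr
      _ = _ := by ring

/-- if `(d-1)/2 <= a <= (d+1)/2` (and `a < d`), then for every `0 < b < (d-1)/2`
the decay estimate holds, i.e. `beta(a, H_m^{d-1}) >= (d-1)/2`. -/
theorem statement5 (d m : ℕ) (hd : 3 ≤ d) (hm1 : 1 ≤ m) (hm2 : 2 * m ≤ d - 1)
    (α : ℝ) (hα1 : ((d : ℝ) - 1) / 2 ≤ α) (hα2 : α ≤ ((d : ℝ) + 1) / 2) (hαd : α < d)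
    (β : ℝ) (hβ0 : 0 < β) (hβ : β < ((d : ℝ) - 1) / 2) :
    decayBound d m α β := by
  obtain ⟨n, rfl⟩ : ∃ n, d = n + 1 := ⟨d - 1, by omega⟩
  have hn : 1 ≤ n := by omega
  have hn' : (1 : ℝ) ≤ n := by exact_mod_cast hn
  have hn0 : (0 : ℝ) < n := by linarith
  push_cast at hα1 hβ
  rw [add_sub_cancel_right] at hα1 hβ
  set C₀ : ℝ := Real.pi ^ ((n : ℝ) / 2) * (n : ℝ) ^ ((n : ℝ) / 4) * 2 ^ (α - (n : ℝ) / 2) with hC₀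
  have hC₀p : 0 < C₀ := by positivity
  refine ⟨Real.sqrt 5 * Real.exp 1 * C₀, by positivity, ?_⟩
  intro μ hμ hsupp R hR
  have hR0 : 0 < R := by linarith
  have hae : ∀ᵐ x ∂μ, x ∈ closedBall (0 : EuclideanSpace ℝ (Fin (n + 1))) 1 := hsupp
  have hae2 : ∀ᵐ p ∂(μ.prod μ), dist p.1 p.2 ≤ 2 := by
    filter_upwards [Measure.quasiMeasurePreserving_fst.ae hae,
      Measure.quasiMeasurePreserving_snd.ae hae] with p h1 h2
    have h3 := dist_triangle_right p.1 p.2 0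
    rw [mem_closedBall] at h1 h2
    linarith
  have hmeas : Measurable fun p : EuclideanSpace ℝ (Fin (n + 1)) × EuclideanSpace ℝ (Fin (n + 1)) =>
      ENNReal.ofReal (dist p.1 p.2) ^ (-α) := by fun_prop
  have hmain : ENNReal.ofReal (∫ ξ : EuclideanSpace ℝ (Fin n),
      ‖ftM μ (R • hypLift (n + 1) m ξ)‖ ^ 2 * Real.exp (-‖ξ‖ ^ 2))
      ≤ ENNReal.ofReal (C₀ * R ^ (-((n : ℝ) / 2))) * energy α μ := by
    refine (s5_fubini n m μ R).trans ?_
    calc _ ≤ ∫⁻ p, ENNReal.ofReal (C₀ * R ^ (-((n : ℝ) / 2))) *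
          ENNReal.ofReal (dist p.1 p.2) ^ (-α) ∂(μ.prod μ) := by
          apply lintegral_mono_ae
          filter_upwards [hae2] with p hp
          exact s5_pt n m hn α hα1 R hR0 p.1 p.2 hp
      _ = _ := by
          rw [lintegral_const_mul _ hmeas, lintegral_prod _ hmeas.aemeasurable]
          rfl
  calc ENNReal.ofReal (hypAvg (n + 1) m μ R)
      ≤ ENNReal.ofReal (Real.sqrt 5 * Real.exp 1) * ENNReal.ofReal (∫ ξ : EuclideanSpace ℝ (Fin n),
        ‖ftM μ (R • hypLift (n + 1) m ξ)‖ ^ 2 * Real.exp (-‖ξ‖ ^ 2)) := by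
        rw [← ENNReal.ofReal_mul (by positivity)]
        exact ENNReal.ofReal_le_ofReal (s5_avg n m μ R)
    _ ≤ ENNReal.ofReal (Real.sqrt 5 * Real.exp 1) *
        (ENNReal.ofReal (C₀ * R ^ (-((n : ℝ) / 2))) * energy α μ) := by gcongr
    _ ≤ _ := by
        rw [← mul_assoc, ← ENNReal.ofReal_mul (by positivity)]
        rw [← mul_assoc]
        gcongr
        exact hR.le
end
end
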